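/- There exists a constant C > 0 such that for every squared Horton set H of n points, every point q of the plane stabs at most C·n empty triangles of H. -/

import Mathlib

open scoped Classical

noncomputable section

/-- Euclidean distance between two points of the plane `ℝ × ℝ`. -/
def elen (p q : ℝ × ℝ) : ℝ := Real.sqrt ((p.1 - q.1) ^ 2 + (p.2 - q.2) ^ 2)

/-- Orientation determinant of an ordered triple of points. -/
def orient (a b c : ℝ × ℝ) : ℝ :=
  (b.1 - a.1) * (c.2 - a.2) - (b.2 - a.2) * (c.1 - a.1)

/-- A planar point set is in general position if no three distinct points are collinear. -/
def GeneralPosition (S : Set (ℝ × ℝ)) : Prop :=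
  ∀ a ∈ S, ∀ b ∈ S, ∀ c ∈ S, a ≠ b → a ≠ c → b ≠ c →
    ¬ Collinear ℝ ({a, b, c} : Set (ℝ × ℝ))

/-- No two points of `S` share an `x`-coordinate. -/
def DistinctX (S : Set (ℝ × ℝ)) : Prop :=
  ∀ a ∈ S, ∀ b ∈ S, a ≠ b → a.1 ≠ b.1

/-- `p` lies strictly below the (non-vertical) line through `a` and `b`, where `a.1 < b.1`. -/
def StrictlyBelow (p a b : ℝ × ℝ) : Prop :=
  (b.1 - a.1) * (p.2 - a.2) < (b.2 - a.2) * (p.1 - a.1)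

/-- `p` lies strictly above the (non-vertical) line through `a` and `b`, where `a.1 < b.1`. -/
def StrictlyAbove (p a b : ℝ × ℝ) : Prop :=
  (b.2 - a.2) * (p.1 - a.1) < (b.1 - a.1) * (p.2 - a.2)

/-- `Y` is high above `X`: every line through two points of `Y` is above every point of `X`. -/
def HighAbove (Y X : Set (ℝ × ℝ)) : Prop :=
  ∀ a ∈ Y, ∀ b ∈ Y, a.1 < b.1 → ∀ p ∈ X, StrictlyBelow p a b

/-- `X` is deep below `Y`: every line through two points of `X` is below every point of `Y`. -/
def DeepBelow (X Y : Set (ℝ × ℝ)) : Prop :=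
  ∀ a ∈ X, ∀ b ∈ X, a.1 < b.1 → ∀ p ∈ Y, StrictlyAbove p a b

/-- The even-indexed points of `H` in increasing order of `x`-coordinate (`H₀`). -/
def evenPart (H : Finset (ℝ × ℝ)) : Finset (ℝ × ℝ) :=
  H.filter fun p => Even (H.filter fun q => q.1 < p.1).card

/-- The odd-indexed points of `H` in increasing order of `x`-coordinate (`H₁`). -/
def oddPart (H : Finset (ℝ × ℝ)) : Finset (ℝ × ℝ) :=
  H.filter fun p => ¬ Even (H.filter fun q => q.1 < p.1).card

/-- Horton sets. -/
inductive IsHorton : Finset (ℝ × ℝ) → Prop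
  | small (H : Finset (ℝ × ℝ)) (hgp : GeneralPosition ↑H) (hx : DistinctX ↑H)
      (hcard : H.card ≤ 2) : IsHorton H
  | split (H : Finset (ℝ × ℝ)) (hgp : GeneralPosition ↑H) (hx : DistinctX ↑H)
      (hcard : 2 < H.card) (h0 : IsHorton (evenPart H)) (h1 : IsHorton (oddPart H))
      (hhigh : HighAbove ↑(oddPart H) ↑(evenPart H))
      (hdeep : DeepBelow ↑(evenPart H) ↑(oddPart H)) : IsHorton H

/-- `t` is an empty triangle of the point set `S`: a three-element non-collinear subset of `S`
whose open interior contains no point of `S`. -/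
def IsEmptyTriangleOf (S : Set (ℝ × ℝ)) (t : Finset (ℝ × ℝ)) : Prop :=
  t.card = 3 ∧ (↑t : Set (ℝ × ℝ)) ⊆ S ∧ ¬ Collinear ℝ (↑t : Set (ℝ × ℝ)) ∧
    ∀ p ∈ S, p ∉ interior (convexHull ℝ (↑t : Set (ℝ × ℝ)))

/-- `τ S`: the number of empty triangles of `S`. -/
def tau (S : Set (ℝ × ℝ)) : ℕ :=
  {t : Finset (ℝ × ℝ) | IsEmptyTriangleOf S t}.ncard

/-- The number of empty triangles of `S` stabbed by the point `q`. -/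
def stabbedCount (S : Set (ℝ × ℝ)) (q : ℝ × ℝ) : ℕ :=
  {t : Finset (ℝ × ℝ) | IsEmptyTriangleOf S t ∧
    q ∈ interior (convexHull ℝ (↑t : Set (ℝ × ℝ)))}.ncard

/-- The number of empty triangles of `S` having `q` as a vertex. -/
def incidentCount (S : Set (ℝ × ℝ)) (q : ℝ × ℝ) : ℕ :=
  {t : Finset (ℝ × ℝ) | IsEmptyTriangleOf S t ∧ q ∈ t}.ncard

/-- The `m × m` integer grid `{1,…,m} × {1,…,m}`, viewed inside `ℝ × ℝ`. -/
def grid (m : ℕ) : Finset (ℝ × ℝ) :=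
  (Finset.Icc 1 m ×ˢ Finset.Icc 1 m).image fun p => ((p.1 : ℝ), (p.2 : ℝ))

/-- The points of the grid on the line spanned by `a` and `b`. -/
def gridLine (m : ℕ) (a b : ℝ × ℝ) : Finset (ℝ × ℝ) :=
  (grid m).filter fun x => Collinear ℝ ({a, b, x} : Set (ℝ × ℝ))

/-- Rotation of the plane by (minus) 90 degrees. -/
def rotCW (p : ℝ × ℝ) : ℝ × ℝ := (p.2, -p.1)

/-- `f` is an `ε`-perturbation of the grid `{1,…,m} × {1,…,m}` turning it into a
squared Horton set (of `m ^ 2` points). -/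
structure IsSquaredHorton (m : ℕ) (ε : ℝ) (f : ℝ × ℝ → ℝ × ℝ) : Prop where
  eps_pos : 0 < ε
  eps_lt : ε < 1 / 4
  inj : Set.InjOn f ↑(grid m)
  close : ∀ p ∈ grid m, elen (f p) p ≤ ε
  orient_iff : ∀ a ∈ grid m, ∀ b ∈ grid m, ∀ c ∈ grid m,
    orient a b c ≠ 0 → (0 < orient a b c ↔ 0 < orient (f a) (f b) (f c))
  nonvertical : ∀ a ∈ grid m, ∀ b ∈ grid m, a ≠ b → a.1 ≠ b.1 →
    IsHorton ((gridLine m a b).image f)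
  vertical : ∀ a ∈ grid m, ∀ b ∈ grid m, a ≠ b → a.1 = b.1 →
    IsHorton (((gridLine m a b).image f).image rotCW)


def Ins (a b c q : ℝ × ℝ) : Prop := 0 < orient a b q ∧ 0 < orient b c q ∧ 0 < orient c a q

lemma distinctX_mono {H K : Finset (ℝ × ℝ)} (h : DistinctX ↑H) (hk : K ⊆ H) : DistinctX ↑K :=
  fun a ha b hb => h a (hk ha) b (hk hb)

lemma IsHorton.dx {H : Finset (ℝ × ℝ)} (h : IsHorton H) : DistinctX ↑H := by
  cases h <;> assumption

lemma horton_succ {H : Finset (ℝ × ℝ)} (hx : DistinctX ↑H) {a b : ℝ × ℝ} (ha : a ∈ H) (hb : b ∈ H)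
    (hab : a.1 < b.1) : ∃ p ∈ H, a.1 < p.1 ∧ p.1 ≤ b.1 ∧
      (H.filter fun q => q.1 < p.1).card = (H.filter fun q => q.1 < a.1).card + 1 := by
  obtain ⟨p, hp, hmin⟩ := Finset.exists_min_image (H.filter fun q => a.1 < q.1) (fun q => q.1)
    ⟨b, by simp [hb, hab]⟩
  simp only [Finset.mem_filter] at hp hmin
  refine ⟨p, hp.1, hp.2, hmin b ⟨hb, hab⟩, ?_⟩
  have : (H.filter fun q => q.1 < p.1) = insert a (H.filter fun q => q.1 < a.1) := by
    ext q
    simp only [Finset.mem_filter, Finset.mem_insert]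
    constructor
    · rintro ⟨hq, hqp⟩
      by_cases h : q = a
      · exact Or.inl h
      · right
        refine ⟨hq, ?_⟩
        rcases lt_trichotomy q.1 a.1 with h1 | h1 | h1
        · exact h1
        · exact absurd h1 (hx q hq a ha h)
        · exact absurd (hmin q ⟨hq, h1⟩) (not_le.2 hqp)
    · rintro (rfl | ⟨hq, hqa⟩)
      · exact ⟨ha, hp.2⟩
      · exact ⟨hq, hqa.trans hp.2⟩
  rw [this, Finset.card_insert_of_notMem (by simp)]

lemma odd_between {H : Finset (ℝ × ℝ)} (hx : DistinctX ↑H) {a b : ℝ × ℝ} (ha : a ∈ evenPart H)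
    (hb : b ∈ evenPart H) (hab : a.1 < b.1) : ∃ p ∈ oddPart H, a.1 < p.1 ∧ p.1 < b.1 := by
  simp only [evenPart, oddPart, Finset.mem_filter] at *
  obtain ⟨p, hp, h1, h2, h3⟩ := horton_succ hx ha.1 hb.1 hab
  have hpo : ¬ Even (H.filter fun q => q.1 < p.1).card := by
    rw [h3, Nat.even_add_one]; exact fun h => h ha.2
  refine ⟨p, ⟨hp, hpo⟩, h1, lt_of_le_of_ne h2 ?_⟩
  refine hx p hp b hb.1 ?_
  rintro rfl
  exact hpo hb.2

lemma even_between {H : Finset (ℝ × ℝ)} (hx : DistinctX ↑H) {a b : ℝ × ℝ} (ha : a ∈ oddPart H)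
    (hb : b ∈ oddPart H) (hab : a.1 < b.1) : ∃ p ∈ evenPart H, a.1 < p.1 ∧ p.1 < b.1 := by
  simp only [evenPart, oddPart, Finset.mem_filter] at *
  obtain ⟨p, hp, h1, h2, h3⟩ := horton_succ hx ha.1 hb.1 hab
  have hpo : Even (H.filter fun q => q.1 < p.1).card := by
    rw [h3, Nat.even_add_one]; exact ha.2
  refine ⟨p, ⟨hp, hpo⟩, h1, lt_of_le_of_ne h2 ?_⟩
  refine hx p hp b hb.1 ?_
  rintro rfl
  exact hb.2 hpo

lemma rank_inj {H : Finset (ℝ × ℝ)} (hx : DistinctX ↑H) {a b : ℝ × ℝ} (ha : a ∈ H) (hb : b ∈ H)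
    (h : (H.filter fun q => q.1 < a.1).card = (H.filter fun q => q.1 < b.1).card) : a = b := by
  have key : ∀ a ∈ H, ∀ b ∈ H, a.1 < b.1 →
      (H.filter fun q => q.1 < a.1).card < (H.filter fun q => q.1 < b.1).card := by
    intro a ha b hb hab
    apply Finset.card_lt_card
    rw [Finset.ssubset_iff_of_subset]
    · exact ⟨a, by simp [ha, hab], by simp⟩
    · intro q hq
      simp only [Finset.mem_filter] at *
      exact ⟨hq.1, hq.2.trans hab⟩
  by_contra hne
  rcases lt_or_gt_of_ne (hx a ha b hb hne) with h1 | h1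
  · have := key a ha b hb h1; omega
  · have := key b hb a ha h1; omega

lemma rank_lt {H : Finset (ℝ × ℝ)} {a : ℝ × ℝ} (ha : a ∈ H) :
    (H.filter fun q => q.1 < a.1).card < H.card := by
  apply Finset.card_lt_card
  rw [Finset.ssubset_iff_of_subset (Finset.filter_subset _ _)]
  exact ⟨a, ha, by simp⟩

lemma card_even_part {H : Finset (ℝ × ℝ)} (hx : DistinctX ↑H) :
    (evenPart H).card ≤ (H.card + 1) / 2 := by
  rw [← Finset.card_range ((H.card + 1) / 2)]
  apply Finset.card_le_card_of_injOn (fun p => (H.filter fun q => q.1 < p.1).card / 2)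
  · intro p hp
    simp only [evenPart, Finset.coe_filter, Set.mem_ofPred_eq] at hp
    have := rank_lt hp.1
    simp only [Finset.coe_range, Set.mem_Iio]
    omega
  · intro p hp p' hp' h
    simp only [evenPart, Finset.coe_filter, Set.mem_ofPred_eq, Nat.even_iff] at hp hp'
    simp only at h
    exact rank_inj hx hp.1 hp'.1 (by omega)

lemma card_odd_part {H : Finset (ℝ × ℝ)} (hx : DistinctX ↑H) :
    (oddPart H).card ≤ (H.card + 1) / 2 := by
  rw [← Finset.card_range ((H.card + 1) / 2)]
  apply Finset.card_le_card_of_injOn (fun p => (H.filter fun q => q.1 < p.1).card / 2)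
  · intro p hp
    simp only [oddPart, Finset.coe_filter, Set.mem_ofPred_eq] at hp
    have := rank_lt hp.1
    simp only [Finset.coe_range, Set.mem_Iio]
    omega
  · intro p hp p' hp' h
    simp only [oddPart, Finset.coe_filter, Set.mem_ofPred_eq, Nat.even_iff] at hp hp'
    simp only at h
    exact rank_inj hx hp.1 hp'.1 (by omega)

lemma card_parts (H : Finset (ℝ × ℝ)) : (evenPart H).card + (oddPart H).card = H.card :=
  Finset.card_filter_add_card_filter_not _

lemma mem_parts {H : Finset (ℝ × ℝ)} {p : ℝ × ℝ} (h : p ∈ H) : p ∈ evenPart H ∨ p ∈ oddPart H := by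
  simp only [evenPart, oddPart, Finset.mem_filter]
  tauto

lemma adj_card {H : Finset (ℝ × ℝ)} (hx : DistinctX ↑H) (P : Finset ((ℝ × ℝ) × (ℝ × ℝ)))
    (h1 : ∀ e ∈ P, e.1 ∈ H ∧ e.2 ∈ H ∧ e.1.1 < e.2.1 ∧ ∀ p ∈ H, e.1.1 < p.1 → ¬ p.1 < e.2.1)
    (h2 : ∀ e ∈ P, ∀ e' ∈ P, e.1.1 < e'.2.1) : P.card ≤ 1 := by
  rw [Finset.card_le_one]
  rintro ⟨a, b⟩ he ⟨a', b'⟩ he'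
  obtain ⟨ha, hb, hab, hE⟩ := h1 _ he
  obtain ⟨ha', hb', hab', hE'⟩ := h1 _ he'
  have c1 := h2 _ he _ he'
  have c2 := h2 _ he' _ he
  simp only at *
  have e1 : a = a' := by
    by_contra hne
    rcases lt_or_gt_of_ne (hx a ha a' ha' hne) with h | h
    · exact hE a' ha' h c2
    · exact hE' a ha h c1
  have e2 : b = b' := by
    by_contra hne
    rcases lt_or_gt_of_ne (hx b hb b' hb' hne) with h | h
    · exact hE' b hb c2 h
    · exact hE b' hb' c1 h
  rw [e1, e2]

lemma small_adj {H : Finset (ℝ × ℝ)} (hc : H.card ≤ 2) {a b p : ℝ × ℝ} (ha : a ∈ H) (hb : b ∈ H)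
    (hp : p ∈ H) (h1 : a.1 < p.1) (h2 : p.1 < b.1) : False := by
  have hs : ({a, p, b} : Finset (ℝ × ℝ)) ⊆ H := by
    intro x; simp only [Finset.mem_insert, Finset.mem_singleton]; rintro (rfl | rfl | rfl) <;> assumption
  have := Finset.card_le_card hs
  rw [Finset.card_eq_three.2 ⟨a, p, b, ?_, ?_, ?_, rfl⟩] at this
  · omega
  · rintro rfl; exact lt_irrefl _ h1
  · rintro rfl; exact lt_irrefl _ (h1.trans h2)
  · rintro rfl; exact lt_irrefl _ h2

lemma small_case {H : Finset (ℝ × ℝ)} (hx : DistinctX ↑H) (hc : H.card ≤ 2) (L : ℕ)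
    (hL : H.card ≤ 2 ^ L) (P : Finset ((ℝ × ℝ) × (ℝ × ℝ)))
    (h1 : ∀ e ∈ P, e.1 ∈ H ∧ e.2 ∈ H ∧ e.1.1 < e.2.1)
    (h2 : ∀ e ∈ P, ∀ e' ∈ P, e.1.1 < e'.2.1) : P.card ≤ L := by
  rcases L with _ | L
  · simp only [pow_zero] at hL
    rw [Finset.card_le_one] at hL
    rw [Nat.le_zero, Finset.card_eq_zero, Finset.eq_empty_iff_forall_notMem]
    intro e he
    obtain ⟨ha, hb, hab⟩ := h1 e he
    rw [hL _ ha _ hb] at hab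
    exact lt_irrefl _ hab
  · have := adj_card hx P (fun e he => ⟨(h1 e he).1, (h1 e he).2.1, (h1 e he).2.2,
      fun p hp u v => small_adj hc (h1 e he).1 (h1 e he).2.1 hp u v⟩) h2
    omega

lemma visUp {H : Finset (ℝ × ℝ)} (h : IsHorton H) : ∀ L : ℕ, H.card ≤ 2 ^ L →
    ∀ P : Finset ((ℝ × ℝ) × (ℝ × ℝ)),
    (∀ e ∈ P, e.1 ∈ H ∧ e.2 ∈ H ∧ e.1.1 < e.2.1 ∧
      ∀ p ∈ H, e.1.1 < p.1 → p.1 < e.2.1 → ¬ 0 < orient e.1 e.2 p) →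
    (∀ e ∈ P, ∀ e' ∈ P, e.1.1 < e'.2.1) → P.card ≤ L := by
  induction h with
  | small H hgp hx hc =>
    intro L hL P h1 h2
    exact small_case hx hc L hL P (fun e he => ⟨(h1 e he).1, (h1 e he).2.1, (h1 e he).2.2.1⟩) h2
  | split H hgp hx hc h0 h1 hhigh hdeep ih0 ih1 =>
    intro L hL P hP h2
    rcases L with _ | L
    · simp at hL; omega
    have hA := ih1 L (by have := card_odd_part hx; rw [pow_succ] at hL; omega)
      (P.filter fun e => e.1 ∈ oddPart H ∧ e.2 ∈ oddPart H)
      (by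
        intro e he
        simp only [Finset.mem_filter] at he
        obtain ⟨ha, hb, hab, hv⟩ := hP e he.1
        exact ⟨he.2.1, he.2.2, hab, fun p hp => hv p (Finset.filter_subset _ _ hp)⟩)
      (fun e he e' he' => h2 e (Finset.filter_subset _ _ he) e' (Finset.filter_subset _ _ he'))
    have hB := adj_card hx (P.filter fun e => ¬ (e.1 ∈ oddPart H ∧ e.2 ∈ oddPart H))
      (by
        rintro ⟨a, b⟩ he
        simp only [Finset.mem_filter] at he
        obtain ⟨he, hno⟩ := he
        obtain ⟨ha, hb, hab, hv⟩ := hP _ he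
        simp only at ha hb hab hv
        refine ⟨ha, hb, hab, ?_⟩
        intro p hp hap hpb
        simp only at hap hpb
        rcases mem_parts ha with ha0 | ha1 <;> rcases mem_parts hb with hb0 | hb1
        · obtain ⟨p', hp', u, w⟩ := odd_between hx ha0 hb0 hab
          refine hv p' (Finset.filter_subset _ _ hp') u w ?_
          have := hdeep a ha0 b hb0 hab p' hp'
          unfold StrictlyAbove at this; unfold orient; linarith
        · obtain ⟨p', hp', u, w⟩ : ∃ p ∈ oddPart H, a.1 < p.1 ∧ p.1 < b.1 := by
            rcases mem_parts hp with hp0 | hp1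
            · obtain ⟨p', hp', u, w⟩ := odd_between hx ha0 hp0 hap
              exact ⟨p', hp', u, w.trans hpb⟩
            · exact ⟨p, hp1, hap, hpb⟩
          refine hv p' (Finset.filter_subset _ _ hp') u w ?_
          have := hhigh p' hp' b hb1 w a ha0
          unfold StrictlyBelow at this; unfold orient; linarith
        · obtain ⟨p', hp', u, w⟩ : ∃ p ∈ oddPart H, a.1 < p.1 ∧ p.1 < b.1 := by
            rcases mem_parts hp with hp0 | hp1
            · obtain ⟨p', hp', u, w⟩ := odd_between hx hp0 hb0 hpb
              exact ⟨p', hp', hap.trans u, w⟩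
            · exact ⟨p, hp1, hap, hpb⟩
          refine hv p' (Finset.filter_subset _ _ hp') u w ?_
          have := hhigh a ha1 p' hp' u b hb0
          unfold StrictlyBelow at this; unfold orient; linarith
        · exact hno ⟨ha1, hb1⟩)
      (fun e he e' he' => h2 e (Finset.filter_subset _ _ he) e' (Finset.filter_subset _ _ he'))
    have := Finset.card_filter_add_card_filter_not (s := P)
      (fun e => e.1 ∈ oddPart H ∧ e.2 ∈ oddPart H)
    omega

lemma visDown {H : Finset (ℝ × ℝ)} (h : IsHorton H) : ∀ L : ℕ, H.card ≤ 2 ^ L →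
    ∀ P : Finset ((ℝ × ℝ) × (ℝ × ℝ)),
    (∀ e ∈ P, e.1 ∈ H ∧ e.2 ∈ H ∧ e.1.1 < e.2.1 ∧
      ∀ p ∈ H, e.1.1 < p.1 → p.1 < e.2.1 → ¬ orient e.1 e.2 p < 0) →
    (∀ e ∈ P, ∀ e' ∈ P, e.1.1 < e'.2.1) → P.card ≤ L := by
  induction h with
  | small H hgp hx hc =>
    intro L hL P h1 h2
    exact small_case hx hc L hL P (fun e he => ⟨(h1 e he).1, (h1 e he).2.1, (h1 e he).2.2.1⟩) h2
  | split H hgp hx hc h0 h1 hhigh hdeep ih0 ih1 =>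
    intro L hL P hP h2
    rcases L with _ | L
    · simp at hL; omega
    have hA := ih0 L (by have := card_even_part hx; rw [pow_succ] at hL; omega)
      (P.filter fun e => e.1 ∈ evenPart H ∧ e.2 ∈ evenPart H)
      (by
        intro e he
        simp only [Finset.mem_filter] at he
        obtain ⟨ha, hb, hab, hv⟩ := hP e he.1
        exact ⟨he.2.1, he.2.2, hab, fun p hp => hv p (Finset.filter_subset _ _ hp)⟩)
      (fun e he e' he' => h2 e (Finset.filter_subset _ _ he) e' (Finset.filter_subset _ _ he'))
    have hB := adj_card hx (P.filter fun e => ¬ (e.1 ∈ evenPart H ∧ e.2 ∈ evenPart H))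
      (by
        rintro ⟨a, b⟩ he
        simp only [Finset.mem_filter] at he
        obtain ⟨he, hno⟩ := he
        obtain ⟨ha, hb, hab, hv⟩ := hP _ he
        simp only at ha hb hab hv
        refine ⟨ha, hb, hab, ?_⟩
        intro p hp hap hpb
        simp only at hap hpb
        rcases (mem_parts ha).symm with ha0 | ha1 <;> rcases (mem_parts hb).symm with hb0 | hb1
        · obtain ⟨p', hp', u, w⟩ := even_between hx ha0 hb0 hab
          refine hv p' (Finset.filter_subset _ _ hp') u w ?_
          have := hhigh a ha0 b hb0 hab p' hp'
          unfold StrictlyBelow at this; unfold orient; linarith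
        · obtain ⟨p', hp', u, w⟩ : ∃ p ∈ evenPart H, a.1 < p.1 ∧ p.1 < b.1 := by
            rcases (mem_parts hp).symm with hp0 | hp1
            · obtain ⟨p', hp', u, w⟩ := even_between hx ha0 hp0 hap
              exact ⟨p', hp', u, w.trans hpb⟩
            · exact ⟨p, hp1, hap, hpb⟩
          refine hv p' (Finset.filter_subset _ _ hp') u w ?_
          have := hdeep p' hp' b hb1 w a ha0
          unfold StrictlyAbove at this; unfold orient; linarith
        · obtain ⟨p', hp', u, w⟩ : ∃ p ∈ evenPart H, a.1 < p.1 ∧ p.1 < b.1 := by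
            rcases (mem_parts hp).symm with hp0 | hp1
            · obtain ⟨p', hp', u, w⟩ := even_between hx hp0 hb0 hpb
              exact ⟨p', hp', hap.trans u, w⟩
            · exact ⟨p, hp1, hap, hpb⟩
          refine hv p' (Finset.filter_subset _ _ hp') u w ?_
          have := hdeep a ha1 p' hp' u b hb0
          unfold StrictlyAbove at this; unfold orient; linarith
        · exact hno ⟨ha1, hb1⟩)
      (fun e he e' he' => h2 e (Finset.filter_subset _ _ he) e' (Finset.filter_subset _ _ he'))
    have := Finset.card_filter_add_card_filter_not (s := P)
      (fun e => e.1 ∈ evenPart H ∧ e.2 ∈ evenPart H)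
    omega

lemma orient_rot (a b c : ℝ × ℝ) : orient a b c = orient b c a := by unfold orient; ring
lemma orient_swap (a b c : ℝ × ℝ) : orient a b c = - orient b a c := by unfold orient; ring

lemma plucker (c a b p q : ℝ × ℝ) : orient c a b * orient c p q - orient c a p * orient c b q
    + orient c a q * orient c b p = 0 := by unfold orient; ring

lemma fan {X : Finset (ℝ × ℝ)} (h : IsHorton X) (L : ℕ) (hL : X.card ≤ 2 ^ L) (c q : ℝ × ℝ)
    (hs : (∀ a ∈ X, ∀ b ∈ X, a.1 < b.1 → 0 < orient a b c) ∨
      (∀ a ∈ X, ∀ b ∈ X, a.1 < b.1 → orient a b c < 0)) :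
    ((X ×ˢ X).filter fun e => 0 < orient e.1 e.2 c ∧ Ins e.1 e.2 c q ∧
      ∀ p ∈ X, ¬ Ins e.1 e.2 c p).card ≤ L := by
  have hx := h.dx
  rcases hs with hs | hs
  · have hlt : ∀ a ∈ X, ∀ b ∈ X, 0 < orient a b c → a.1 < b.1 := by
      intro a ha b hb hab
      by_contra hn
      rcases eq_or_ne a b with rfl | hne
      · unfold orient at hab; nlinarith
      have := hs b hb a ha (lt_of_le_of_ne (not_lt.1 hn) (hx b hb a ha hne.symm))
      rw [orient_swap] at this; linarith
    apply visUp h L hL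
    · rintro ⟨a, b⟩ he
      simp only [Finset.mem_filter, Finset.mem_product] at he
      obtain ⟨⟨ha, hb⟩, ho, hq, he⟩ := he
      refine ⟨ha, hb, hlt a ha b hb ho, ?_⟩
      intro p hp h1 h2 h3
      refine he p hp ⟨h3, ?_, ?_⟩
      · have := hs p hp b hb h2
        rw [orient_rot] at this; exact this
      · have := hs a ha p hp h1
        rw [orient_rot, orient_rot] at this; exact this
    · rintro ⟨a, b⟩ he ⟨a', b'⟩ he'
      simp only [Finset.mem_filter, Finset.mem_product] at he he'
      obtain ⟨⟨ha, hb⟩, ho, hq, -⟩ := he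
      obtain ⟨⟨ha', hb'⟩, ho', hq', -⟩ := he'
      simp only
      by_contra hn
      have q1 : orient c b' q < 0 := by have := hq'.2.1; rw [orient_swap] at this; linarith
      rcases eq_or_ne a b' with rfl | hne
      · have := hq.2.2; linarith
      have hlt' := lt_of_le_of_ne (not_lt.1 hn) (hx b' hb' a ha hne.symm)
      have o1 := hs b' hb' a ha hlt'
      have o2 := hs a' ha' a ha ((hlt a' ha' b' hb' ho').trans hlt')
      rw [orient_rot, orient_rot] at o1 o2 ho'
      have := plucker c a' b' a q
      have m1 := mul_pos ho' hq.2.2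
      have m2 := mul_pos o2 (neg_pos.2 q1)
      have m3 := mul_pos hq'.2.2 o1
      linarith
  · have hlt : ∀ a ∈ X, ∀ b ∈ X, 0 < orient a b c → b.1 < a.1 := by
      intro a ha b hb hab
      by_contra hn
      rcases eq_or_ne a b with rfl | hne
      · unfold orient at hab; nlinarith
      have := hs a ha b hb (lt_of_le_of_ne (not_lt.1 hn) (hx a ha b hb hne))
      linarith
    rw [← Finset.card_image_of_injective _ Prod.swap_injective]
    apply visDown h L hL
    · rintro ⟨b, a⟩ he
      simp only [Finset.mem_image, Finset.mem_filter, Finset.mem_product] at he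
      obtain ⟨⟨a, b⟩, ⟨⟨ha, hb⟩, ho, hq, he⟩, heq⟩ := he
      cases heq
      refine ⟨hb, ha, hlt a ha b hb ho, ?_⟩
      intro p hp h1 h2 h3
      refine he p hp ⟨?_, ?_, ?_⟩
      · rw [orient_swap]; simp only at h3; linarith
      · have := hs b hb p hp h1
        rw [orient_rot, orient_swap] at this
        rw [orient_rot, orient_swap, orient_rot] at this ⊢; unfold orient at *; linarith
      · have := hs p hp a ha h2
        unfold orient at *; linarith
    · rintro ⟨b, a⟩ he ⟨b', a'⟩ he'
      simp only [Finset.mem_image, Finset.mem_filter, Finset.mem_product] at he he'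
      obtain ⟨⟨a, b⟩, ⟨⟨ha, hb⟩, ho, hq, -⟩, heq⟩ := he
      cases heq
      obtain ⟨⟨a', b'⟩, ⟨⟨ha', hb'⟩, ho', hq', -⟩, heq⟩ := he'
      cases heq
      simp only
      by_contra hn
      have q1 : orient c b q < 0 := by have := hq.2.1; rw [orient_swap] at this; linarith
      rcases eq_or_ne a' b with rfl | hne
      · have := hq'.2.2; linarith
      have hlt' := lt_of_le_of_ne (not_lt.1 hn) (hx a' ha' b hb hne)
      have o1 := hs a' ha' b hb hlt'
      have o2 := hs a' ha' a ha (hlt'.trans (hlt a ha b hb ho))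
      have := plucker c a b a' q
      rw [orient_rot, orient_rot, orient_swap, orient_rot, orient_rot] at o1 o2
      rw [orient_rot, orient_rot] at ho
      have e1 : 0 < orient c b a' := by unfold orient at *; linarith
      have e2 : 0 < orient c a a' := by unfold orient at *; linarith
      have m1 := mul_pos ho hq'.2.2
      have m2 := mul_pos e2 (neg_pos.2 q1)
      have m3 := mul_pos hq.2.2 e1
      linarith

lemma fanC {X : Finset (ℝ × ℝ)} (h : IsHorton X) (L : ℕ) (hL : X.card ≤ 2 ^ L) (q : ℝ × ℝ)
    (C : Finset (ℝ × ℝ))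
    (hs : ∀ c ∈ C, (∀ a ∈ X, ∀ b ∈ X, a.1 < b.1 → 0 < orient a b c) ∨
      (∀ a ∈ X, ∀ b ∈ X, a.1 < b.1 → orient a b c < 0))
    (S : Finset ((ℝ × ℝ) × (ℝ × ℝ) × (ℝ × ℝ)))
    (hS : ∀ t ∈ S, t.1 ∈ X ∧ t.2.1 ∈ X ∧ t.2.2 ∈ C ∧ 0 < orient t.1 t.2.1 t.2.2 ∧
      Ins t.1 t.2.1 t.2.2 q ∧ ∀ p ∈ X, ¬ Ins t.1 t.2.1 t.2.2 p) :
    S.card ≤ L * C.card := by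
  apply Finset.card_le_mul_card_image_of_maps_to (f := fun t => t.2.2) (fun t ht => (hS t ht).2.2.1)
  intro c hc
  refine le_trans ?_ (fan h L hL c q (hs c hc))
  apply Finset.card_le_card_of_injOn (fun t => (t.1, t.2.1))
  · rintro ⟨a, b, c'⟩ ht
    simp only [Finset.coe_filter, Set.mem_ofPred_eq] at ht
    obtain ⟨ht, rfl⟩ := ht
    have := hS _ ht
    simp only [Finset.coe_filter, Set.mem_ofPred_eq, Finset.mem_product]
    exact ⟨⟨this.1, this.2.1⟩, this.2.2.2⟩
  · rintro ⟨a, b, c'⟩ ht ⟨a', b', c''⟩ ht' he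
    simp only [Finset.coe_filter, Set.mem_ofPred_eq] at ht ht'
    obtain ⟨ht, rfl⟩ := ht
    obtain ⟨ht', rfl⟩ := ht'
    simp only [Prod.mk.injEq] at he
    rw [he.1, he.2]

def Tri (X : Finset (ℝ × ℝ)) (q : ℝ × ℝ) : Finset ((ℝ × ℝ) × (ℝ × ℝ) × (ℝ × ℝ)) :=
  (X ×ˢ X ×ˢ X).filter fun t => 0 < orient t.1 t.2.1 t.2.2 ∧
      Ins t.1 t.2.1 t.2.2 q ∧ ∀ p ∈ X, ¬ Ins t.1 t.2.1 t.2.2 p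

lemma mem_Tri {X : Finset (ℝ × ℝ)} {q a b c : ℝ × ℝ} : (a, b, c) ∈ Tri X q ↔
    (a ∈ X ∧ b ∈ X ∧ c ∈ X) ∧ 0 < orient a b c ∧ Ins a b c q ∧ ∀ p ∈ X, ¬ Ins a b c p := by
  simp [Tri]

lemma Ins_rot {a b c q : ℝ × ℝ} : Ins a b c q ↔ Ins b c a q := by unfold Ins; tauto

lemma Tri_rot {X : Finset (ℝ × ℝ)} {q a b c : ℝ × ℝ} (h : (a, b, c) ∈ Tri X q) :
    (b, c, a) ∈ Tri X q := by
  rw [mem_Tri] at *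
  refine ⟨⟨h.1.2.1, h.1.2.2, h.1.1⟩, by rw [← orient_rot]; exact h.2.1, Ins_rot.1 h.2.2.1,
    fun p hp hi => h.2.2.2 p hp (Ins_rot.2 hi)⟩

lemma orient_ne {a b c : ℝ × ℝ} (h : 0 < orient a b c) : a ≠ b ∧ a ≠ c ∧ b ≠ c := by
  refine ⟨?_, ?_, ?_⟩ <;> rintro rfl <;> unfold orient at h <;> nlinarith

lemma tri_bound {X : Finset (ℝ × ℝ)} (h : IsHorton X) (q : ℝ × ℝ) : ∀ L : ℕ, X.card ≤ 2 ^ L →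
    (Tri X q).card ≤ 3 * X.card * L ^ 2 := by
  induction h with
  | small H hgp hx hc =>
    intro L hL
    have : Tri H q = ∅ := by
      rw [Finset.eq_empty_iff_forall_notMem]
      rintro ⟨a, b, c⟩ ht
      rw [mem_Tri] at ht
      obtain ⟨h1, h2, h3⟩ := orient_ne ht.2.1
      have hs : ({a, b, c} : Finset (ℝ × ℝ)) ⊆ H := by
        intro x; simp only [Finset.mem_insert, Finset.mem_singleton]
        rintro (rfl | rfl | rfl)
        exacts [ht.1.1, ht.1.2.1, ht.1.2.2]
      have := Finset.card_le_card hs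
      rw [Finset.card_eq_three.2 ⟨a, b, c, h1, h2, h3, rfl⟩] at this
      omega
    simp [this]
  | split H hgp hx hc h0 h1 hhigh hdeep ih0 ih1 =>
    intro L hL
    rcases L with _ | L
    · simp at hL; omega
    have c0 : (evenPart H).card ≤ 2 ^ L := by
      have := card_even_part hx; rw [pow_succ] at hL; omega
    have c1 : (oddPart H).card ≤ 2 ^ L := by
      have := card_odd_part hx; rw [pow_succ] at hL; omega
    have i0 := ih0 L c0
    have i1 := ih1 L c1
    have sub0 : evenPart H ⊆ H := Finset.filter_subset _ _
    have sub1 : oddPart H ⊆ H := Finset.filter_subset _ _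
    set M0 := (Tri H q).filter fun t => t.1 ∈ evenPart H ∧ t.2.1 ∈ evenPart H ∧ t.2.2 ∈ oddPart H
      with hM0
    set M1 := (Tri H q).filter fun t => t.1 ∈ oddPart H ∧ t.2.1 ∈ oddPart H ∧ t.2.2 ∈ evenPart H
      with hM1
    have b0 : M0.card ≤ L * (oddPart H).card := by
      apply fanC h0 L c0 q
      · intro c hc
        left
        intro a ha b hb hab
        have := hdeep a ha b hb hab c hc
        unfold StrictlyAbove at this; unfold orient; linarith
      · rintro ⟨a, b, c⟩ ht
        rw [hM0, Finset.mem_filter, mem_Tri] at ht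
        exact ⟨ht.2.1, ht.2.2.1, ht.2.2.2, ht.1.2.1, ht.1.2.2.1, fun p hp => ht.1.2.2.2 p (sub0 hp)⟩
    have b1 : M1.card ≤ L * (evenPart H).card := by
      apply fanC h1 L c1 q
      · intro c hc
        right
        intro a ha b hb hab
        have := hhigh a ha b hb hab c hc
        unfold StrictlyBelow at this; unfold orient; linarith
      · rintro ⟨a, b, c⟩ ht
        rw [hM1, Finset.mem_filter, mem_Tri] at ht
        exact ⟨ht.2.1, ht.2.2.1, ht.2.2.2, ht.1.2.1, ht.1.2.2.1, fun p hp => ht.1.2.2.2 p (sub1 hp)⟩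
    set M := M0 ∪ M1 with hM
    have bM : M.card ≤ L * H.card := by
      have := Finset.card_union_le M0 M1
      rw [← card_parts H]
      nlinarith
    let r : (ℝ × ℝ) × (ℝ × ℝ) × (ℝ × ℝ) → (ℝ × ℝ) × (ℝ × ℝ) × (ℝ × ℝ) := fun t => (t.2.1, t.2.2, t.1)
    have hsub : Tri H q ⊆ (Tri (evenPart H) q ∪ Tri (oddPart H) q) ∪ (M ∪ (M.image r ∪ (M.image r).image r)) := by
      rintro ⟨a, b, c⟩ ht
      have ht' := Tri_rot ht
      have ht'' := Tri_rot ht'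
      have hh := mem_Tri.1 ht
      have k1 : (b, c, a) ∈ M → (a, b, c) ∈ (M.image r).image r := fun h =>
        Finset.mem_image.2 ⟨(c, a, b), Finset.mem_image.2 ⟨(b, c, a), h, rfl⟩, rfl⟩
      have k2 : (c, a, b) ∈ M → (a, b, c) ∈ M.image r := fun h =>
        Finset.mem_image.2 ⟨(c, a, b), h, rfl⟩
      have g0 : ∀ {x y z}, (x, y, z) ∈ Tri H q → x ∈ evenPart H → y ∈ evenPart H → z ∈ oddPart H →
          (x, y, z) ∈ M := fun h u v w => Finset.mem_union_left _ (Finset.mem_filter.2 ⟨h, u, v, w⟩)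
      have g1 : ∀ {x y z}, (x, y, z) ∈ Tri H q → x ∈ oddPart H → y ∈ oddPart H → z ∈ evenPart H →
          (x, y, z) ∈ M := fun h u v w => Finset.mem_union_right _ (Finset.mem_filter.2 ⟨h, u, v, w⟩)
      simp only [Finset.mem_union (s := _ ∪ _), Finset.mem_union (s := Tri _ _),
        Finset.mem_union (s := M), Finset.mem_union (s := M.image r)]
      rcases mem_parts hh.1.1 with ha | ha <;> rcases mem_parts hh.1.2.1 with hb | hb <;>
        rcases mem_parts hh.1.2.2 with hc | hc
      · exact Or.inl (Or.inl (mem_Tri.2 ⟨⟨ha, hb, hc⟩, hh.2.1, hh.2.2.1, fun p hp => hh.2.2.2 p (sub0 hp)⟩))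
      · exact Or.inr (Or.inl (g0 ht ha hb hc))
      · exact Or.inr (Or.inr (Or.inl (k2 (g0 ht'' hc ha hb))))
      · exact Or.inr (Or.inr (Or.inr (k1 (g1 ht' hb hc ha))))
      · exact Or.inr (Or.inr (Or.inr (k1 (g0 ht' hb hc ha))))
      · exact Or.inr (Or.inr (Or.inl (k2 (g1 ht'' hc ha hb))))
      · exact Or.inr (Or.inl (g1 ht ha hb hc))
      · exact Or.inl (Or.inr (mem_Tri.2 ⟨⟨ha, hb, hc⟩, hh.2.1, hh.2.2.1, fun p hp => hh.2.2.2 p (sub1 hp)⟩))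
    have e0 := Finset.card_le_card hsub
    have e1 := Finset.card_union_le (Tri (evenPart H) q ∪ Tri (oddPart H) q) (M ∪ (M.image r ∪ (M.image r).image r))
    have e2 := Finset.card_union_le (Tri (evenPart H) q) (Tri (oddPart H) q)
    have e3 := Finset.card_union_le M (M.image r ∪ (M.image r).image r)
    have e4 := Finset.card_union_le (M.image r) ((M.image r).image r)
    have e5 : (M.image r).card ≤ M.card := Finset.card_image_le
    have e6 : ((M.image r).image r).card ≤ (M.image r).card := Finset.card_image_le
    have e7 : (Tri H q).card ≤ 3 * ((evenPart H).card + (oddPart H).card) * L ^ 2 + 3 * (L * H.card) := by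
      have : 3 * ((evenPart H).card + (oddPart H).card) * L ^ 2 = 3 * (evenPart H).card * L ^ 2
        + 3 * (oddPart H).card * L ^ 2 := by ring
      omega
    rw [card_parts] at e7
    refine e7.trans ?_
    have : 3 * H.card * (L + 1) ^ 2 = 3 * H.card * L ^ 2 + 3 * (L * H.card) + 3 * (L * H.card) + 3 * H.card := by ring
    omega

/-! lattice part -/

def det (v p : ℤ × ℤ) : ℤ := v.1 * p.2 - v.2 * p.1

def D3 (a b c : ℤ × ℤ) : ℤ := (b.1 - a.1) * (c.2 - a.2) - (b.2 - a.2) * (c.1 - a.1)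

lemma lattice_aux (a b c : ℤ × ℤ) (v : ℤ × ℤ) (d : ℤ) (hd : 0 < d) (hv : IsCoprime v.1 v.2)
    (hb1 : b.1 - a.1 = d * v.1) (hb2 : b.2 - a.2 = d * v.2)
    (h1 : (Int.gcd (c.1 - b.1) (c.2 - b.2) : ℤ) ≤ d)
    (h2 : (Int.gcd (a.1 - c.1) (a.2 - c.2) : ℤ) ≤ d)
    (hpos : 3 ≤ det v (c - a)) :
    ∃ p, 0 < D3 a b p ∧ 0 < D3 b c p ∧ 0 < D3 c a p := by
  obtain ⟨w2, w1', hw⟩ := hv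
  -- `det v (-w1', w2) = 1`
  set h := det v (c - a) with hh
  simp only [det, Prod.fst_sub, Prod.snd_sub] at hh
  obtain ⟨s, hs⟩ : ∃ s, s = (c.1 - a.1) * w2 + (c.2 - a.2) * w1' := ⟨_, rfl⟩
  have hc1 : c.1 - a.1 = s * v.1 - h * w1' := by rw [hs, hh]; linear_combination (-(c.1 - a.1)) * hw
  have hc2 : c.2 - a.2 = s * v.2 + h * w2 := by rw [hs, hh]; linear_combination (-(c.2 - a.2)) * hw
  suffices H : ∃ x y : ℤ, 0 < y ∧ y * s < x * h ∧ h * x < h * d - d * y + s * y by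
    obtain ⟨x, y, hy, hx1, hx2⟩ := H
    refine ⟨(a.1 + x * v.1 - y * w1', a.2 + x * v.2 + y * w2), ?_, ?_, ?_⟩
    · have : D3 a b (a.1 + x * v.1 - y * w1', a.2 + x * v.2 + y * w2) = d * y := by
        simp only [D3]; rw [hb1, hb2]; linear_combination (d * y) * hw
      rw [this]; positivity
    · have : D3 b c (a.1 + x * v.1 - y * w1', a.2 + x * v.2 + y * w2) = (s - d) * y - h * (x - d) := by
        have e1 : b.1 = a.1 + d * v.1 := by linarith
        have e2 : b.2 = a.2 + d * v.2 := by linarith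
        have e3 : c.1 = a.1 + s * v.1 - h * w1' := by linarith
        have e4 : c.2 = a.2 + s * v.2 + h * w2 := by linarith
        simp only [D3]; rw [e1, e2, e3, e4]; linear_combination ((s - d) * y - h * (x - d)) * hw
      rw [this]; linarith
    · have : D3 c a (a.1 + x * v.1 - y * w1', a.2 + x * v.2 + y * w2) = x * h - y * s := by
        have e3 : c.1 = a.1 + s * v.1 - h * w1' := by linarith
        have e4 : c.2 = a.2 + s * v.2 + h * w2 := by linarith
        simp only [D3]; rw [e3, e4]; linear_combination (x * h - y * s) * hw
      rw [this]; linarith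
  clear_value h
  rcases eq_or_lt_of_le (show 1 ≤ d by omega) with hd1 | hd2
  · subst hd1
    have cop : ∀ x y : ℤ, (Int.gcd x y : ℤ) ≤ 1 → ∀ g : ℤ, 2 ≤ g → g ∣ x → g ∣ y →  x = 0 ∧ y = 0 := by
      intro x y hxy g hg hx hy
      have := Int.dvd_coe_gcd hx hy
      have h0 : (Int.gcd x y : ℤ) = 0 := by
        by_contra hne
        have h3 : (0 : ℤ) ≤ Int.gcd x y := by positivity
        have := Int.le_of_dvd (by omega) this
        omega
      have h0' : Int.gcd x y = 0 := by exact_mod_cast h0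
      exact Int.gcd_eq_zero_iff.1 h0'
    have hsh : IsCoprime s h := by
      rw [Int.isCoprime_iff_gcd_eq_one]
      by_contra hne
      have hg0 : Int.gcd s h ≠ 0 := by
        intro h0; have := (Int.gcd_eq_zero_iff.1 h0).2; omega
      have hg1 : ((Int.gcd s h : ℕ) : ℤ) ∣ s := Int.gcd_dvd_left _ _
      have hg2 : ((Int.gcd s h : ℕ) : ℤ) ∣ h := Int.gcd_dvd_right _ _
      have := cop _ _ h2 (Int.gcd s h) (by omega)
        (by rw [← neg_sub, hc1]; exact (dvd_neg.2 (dvd_sub (hg1.mul_right _) (hg2.mul_right _))))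
        (by rw [← neg_sub, hc2]; exact (dvd_neg.2 (dvd_add (hg1.mul_right _) (hg2.mul_right _))))
      have : h = 0 := by
        have h5 : c.1 - a.1 = 0 := by linarith [this.1]
        have h6 : c.2 - a.2 = 0 := by linarith [this.2]
        rw [hh, h5, h6]; ring
      omega
    have hsh' : ¬ h ∣ s - 1 := by
      intro hdv
      have := cop _ _ h1 h (by omega)
        (by
          have : c.1 - b.1 = (s - 1) * v.1 - h * w1' := by linear_combination hc1 - hb1
          rw [this]; exact dvd_sub (hdv.mul_right _) (dvd_mul_right _ _))
        (by
          have : c.2 - b.2 = (s - 1) * v.2 + h * w2 := by linear_combination hc2 - hb2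
          rw [this]; exact dvd_add (hdv.mul_right _) (dvd_mul_right _ _))
      have : h = 0 := by
        rw [hh]
        have h5 : c.1 - a.1 = v.1 := by linarith [this.1]
        have h6 : c.2 - a.2 = v.2 := by linarith [this.2]
        rw [h5, h6]; ring
      omega
    obtain ⟨u, z, huz⟩ := hsh
    -- u * s + z * h = 1
    have hmod := Int.emod_add_mul_ediv (-u) h
    set y := (-u) % h with hy
    set k := (-u) / h
    have hy0 : 0 ≤ y := Int.emod_nonneg _ (by omega)
    have hyh : y < h := Int.emod_lt_of_pos _ (by omega)
    clear_value y k
    have hxe : (z - k * s) * h = s * y + 1 := by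
      have : u = - (y + h * k) := by linarith
      rw [this] at huz; linear_combination huz
    have hyne : y ≠ 0 := by
      intro h0; rw [h0] at hxe
      have : h ∣ 1 := ⟨z - k * s, by linarith⟩
      have := Int.le_of_dvd one_pos this
      omega
    have hyne' : y ≠ h - 1 := by
      intro h0
      apply hsh'
      refine ⟨s - (z - k * s), ?_⟩
      rw [h0] at hxe; linarith
    refine ⟨z - k * s, y, by omega, by linarith, ?_⟩
    have : y + 2 ≤ h := by omega
    nlinarith
  · refine ⟨s / h + 1, 1, one_pos, ?_, ?_⟩
    · have := Int.lt_ediv_add_one_mul_self s (show 0 < h by omega)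
      linarith
    · have := Int.ediv_mul_le s (show h ≠ 0 by omega)
      nlinarith

lemma collinear_of_orient {a b c : ℝ × ℝ} (hab : a ≠ b) (h : orient a b c = 0) :
    Collinear ℝ ({a, b, c} : Set (ℝ × ℝ)) := by
  rw [collinear_iff_of_mem (p₀ := a) (by simp)]
  refine ⟨b - a, ?_⟩
  have hc : ∃ r : ℝ, c = r • (b - a) + a := by
    unfold orient at h
    by_cases h1 : b.1 - a.1 = 0
    · have h2 : b.2 - a.2 ≠ 0 := by
        intro h2; exact hab (Prod.ext (by linarith) (by linarith))
      refine ⟨(c.2 - a.2) / (b.2 - a.2), Prod.ext ?_ ?_⟩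
      · rw [h1] at h
        have : c.1 - a.1 = 0 := by
          rcases mul_eq_zero.1 (show (b.2 - a.2) * (c.1 - a.1) = 0 by linarith) with h | h
          · exact absurd h h2
          · exact h
        simp only [Prod.fst_add, Prod.smul_fst, Prod.fst_sub, smul_eq_mul, h1]; linarith
      · simp only [Prod.snd_add, Prod.smul_snd, Prod.snd_sub, smul_eq_mul]; field_simp; ring
    · refine ⟨(c.1 - a.1) / (b.1 - a.1), Prod.ext ?_ ?_⟩
      · simp only [Prod.fst_add, Prod.smul_fst, Prod.fst_sub, smul_eq_mul]; field_simp; ring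
      · simp only [Prod.snd_add, Prod.smul_snd, Prod.snd_sub, smul_eq_mul]; field_simp; linarith
  obtain ⟨r, hr⟩ := hc
  intro p hp
  simp only [Set.mem_insert_iff, Set.mem_singleton_iff] at hp
  rcases hp with rfl | rfl | rfl
  · exact ⟨0, by simp⟩
  · exact ⟨1, by simp⟩
  · exact ⟨r, by simpa using hr⟩

lemma orient_of_collinear {a b c : ℝ × ℝ} (h : Collinear ℝ ({a, b, c} : Set (ℝ × ℝ))) :
    orient a b c = 0 := by
  rw [collinear_iff_of_mem (p₀ := a) (by simp)] at h
  obtain ⟨v, hv⟩ := h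
  obtain ⟨r, hr⟩ := hv b (by simp)
  obtain ⟨s, hs⟩ := hv c (by simp)
  rw [hr, hs]
  simp [orient]; ring

lemma interior_pos {S : Set (ℝ × ℝ)} {x y z q : ℝ × ℝ} (hS : ∀ s ∈ S, 0 ≤ orient x y s)
    (hz : 0 < orient x y z) (hq : q ∈ interior (convexHull ℝ S)) : 0 < orient x y q := by
  have hull : ∀ s ∈ convexHull ℝ S, 0 ≤ orient x y s := by
    have : convexHull ℝ S ⊆ {s | 0 ≤ orient x y s} := by
      apply convexHull_min hS
      intro s hs t ht α β hα hβ hαβ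
      have hs' : 0 ≤ orient x y s := hs
      have ht' : 0 ≤ orient x y t := ht
      have : orient x y (α • s + β • t) = α * orient x y s + β * orient x y t := by
        have : β = 1 - α := by linarith
        subst this
        simp only [orient, Prod.fst_add, Prod.smul_fst, Prod.snd_add, Prod.smul_snd, smul_eq_mul]; ring
      change 0 ≤ orient x y (α • s + β • t)
      rw [this]; positivity
    exact this
  have hc : ContinuousAt (fun t : ℝ => q + t • (q - z)) 0 := by fun_prop
  have hn : convexHull ℝ S ∈ nhds ((fun t : ℝ => q + t • (q - z)) 0) := by
    simpa using mem_interior_iff_mem_nhds.1 hq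
  have ev := hc.eventually hn
  have ev' : ∀ᶠ t in nhdsWithin (0 : ℝ) (Set.Ioi 0), q + t • (q - z) ∈ convexHull ℝ S :=
    ev.filter_mono nhdsWithin_le_nhds
  obtain ⟨t, ht, ht0⟩ := (ev'.and self_mem_nhdsWithin).exists
  have ht0 : 0 < t := ht0
  have := hull _ ht
  have e : orient x y (q + t • (q - z)) = (1 + t) * orient x y q - t * orient x y z := by
    simp only [orient, Prod.fst_add, Prod.smul_fst, Prod.snd_add, Prod.smul_snd, smul_eq_mul,
      Prod.fst_sub, Prod.snd_sub]; ring
  rw [e] at this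
  by_contra hn
  have h1 : (1 + t) * orient x y q ≤ 0 := mul_nonpos_of_nonneg_of_nonpos (by linarith) (not_lt.1 hn)
  have h2 := mul_pos ht0 hz
  linarith

lemma orient_self1 (a b : ℝ × ℝ) : orient a b a = 0 := by unfold orient; ring
lemma orient_self2 (a b : ℝ × ℝ) : orient a b b = 0 := by unfold orient; ring

lemma ins_of_interior {a b c q : ℝ × ℝ} (h : 0 < orient a b c)
    (hq : q ∈ interior (convexHull ℝ ({a, b, c} : Set (ℝ × ℝ)))) : Ins a b c q := by
  have h' : 0 < orient b c a := by rw [← orient_rot]; exact h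
  have h'' : 0 < orient c a b := by rw [← orient_rot]; exact h'
  refine ⟨interior_pos ?_ h hq, interior_pos ?_ h' hq, interior_pos ?_ h'' hq⟩ <;>
  · intro s hs
    simp only [Set.mem_insert_iff, Set.mem_singleton_iff] at hs
    rcases hs with rfl | rfl | rfl <;>
      first | (rw [orient_self1]) | (rw [orient_self2]) | (exact le_of_lt (by assumption))

lemma orient_sum (a b c p : ℝ × ℝ) : orient a b c = orient a b p + orient b c p + orient c a p := by
  unfold orient; ring

lemma interior_of_ins {a b c q : ℝ × ℝ} (h : Ins a b c q) :
    q ∈ interior (convexHull ℝ ({a, b, c} : Set (ℝ × ℝ))) := by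
  have hopen : IsOpen {p | Ins a b c p} := by
    have c1 : ∀ x y : ℝ × ℝ, Continuous fun p => orient x y p := by
      intro x y; unfold orient; fun_prop
    exact (isOpen_lt continuous_const (c1 a b)).inter
      ((isOpen_lt continuous_const (c1 b c)).inter (isOpen_lt continuous_const (c1 c a)))
  rw [mem_interior]
  refine ⟨_, ?_, hopen, h⟩
  intro p hp
  obtain ⟨h1, h2, h3⟩ := hp
  have hs := orient_sum a b c p
  have h0 : 0 < orient a b c := by linarith
  have key : p = ∑ i : Fin 3, (![orient b c p / orient a b c, orient c a p / orient a b c,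
      orient a b p / orient a b c] i) • (![a, b, c] i) := by
    simp only [Fin.sum_univ_three, Matrix.cons_val_zero, Matrix.cons_val_one, Matrix.cons_val]
    apply Prod.ext
    · simp only [Prod.fst_add, Prod.smul_fst, smul_eq_mul]
      field_simp
      unfold orient; ring
    · simp only [Prod.snd_add, Prod.smul_snd, smul_eq_mul]
      field_simp
      unfold orient; ring
  rw [key]
  apply (convex_convexHull ℝ _).sum_mem
  · intro i _
    fin_cases i <;> simp <;> positivity
  · simp only [Fin.sum_univ_three, Matrix.cons_val_zero, Matrix.cons_val_one, Matrix.cons_val]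
    field_simp
    linarith
  · intro i _
    apply subset_convexHull
    fin_cases i <;> simp

lemma bary (a b c x y q : ℝ × ℝ) : orient a b c * orient x y q = orient b c q * orient x y a +
    orient c a q * orient x y b + orient a b q * orient x y c := by unfold orient; ring

def gz (p : ℤ × ℤ) : ℝ × ℝ := ((p.1 : ℝ), (p.2 : ℝ))

def GZ (m : ℕ) : Finset (ℤ × ℤ) := Finset.Icc (1 : ℤ) m ×ˢ Finset.Icc (1 : ℤ) m

lemma mem_GZ {m : ℕ} {p : ℤ × ℤ} : p ∈ GZ m ↔ (1 ≤ p.1 ∧ p.1 ≤ m) ∧ (1 ≤ p.2 ∧ p.2 ≤ m) := by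
  simp [GZ]

lemma gz_inj : Function.Injective gz := by
  intro p q h
  simp only [gz, Prod.mk.injEq, Int.cast_inj] at h
  exact Prod.ext h.1 h.2

lemma grid_eq (m : ℕ) : grid m = (GZ m).image gz := by
  ext x
  simp only [grid, Finset.mem_image, Finset.mem_product, Finset.mem_Icc, mem_GZ]
  constructor
  · rintro ⟨⟨a, b⟩, h, rfl⟩
    exact ⟨((a : ℤ), (b : ℤ)), by simpa using h, by simp [gz]⟩
  · rintro ⟨⟨a, b⟩, h, rfl⟩
    refine ⟨(a.toNat, b.toNat), by simp only at *; omega, ?_⟩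
    simp only at h
    have h1 : ((a.toNat : ℤ) : ℝ) = a := by rw [Int.toNat_of_nonneg (by omega)]
    have h2 : ((b.toNat : ℤ) : ℝ) = b := by rw [Int.toNat_of_nonneg (by omega)]
    simp only [gz]; rw [← h1, ← h2]; simp only [Int.cast_natCast]

lemma gz_mem {m : ℕ} {p : ℤ × ℤ} (h : p ∈ GZ m) : gz p ∈ grid m := by
  rw [grid_eq]; exact Finset.mem_image_of_mem _ h

lemma orient_gz (a b c : ℤ × ℤ) : orient (gz a) (gz b) (gz c) = (D3 a b c : ℝ) := by
  simp [orient, gz, D3]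

lemma phi_pos {m : ℕ} {ε : ℝ} {f : ℝ × ℝ → ℝ × ℝ} (h : IsSquaredHorton m ε f) {a b c : ℤ × ℤ}
    (ha : a ∈ GZ m) (hb : b ∈ GZ m) (hc : c ∈ GZ m) (hD : 0 < D3 a b c) :
    0 < orient (f (gz a)) (f (gz b)) (f (gz c)) := by
  have hD' : (0 : ℝ) < D3 a b c := by exact_mod_cast hD
  rw [← orient_gz] at hD'
  exact (h.orient_iff _ (gz_mem ha) _ (gz_mem hb) _ (gz_mem hc) hD'.ne').1 hD'

lemma phi_neg {m : ℕ} {ε : ℝ} {f : ℝ × ℝ → ℝ × ℝ} (h : IsSquaredHorton m ε f) {a b c : ℤ × ℤ}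
    (ha : a ∈ GZ m) (hb : b ∈ GZ m) (hc : c ∈ GZ m) (hD : D3 a b c < 0) :
    orient (f (gz a)) (f (gz b)) (f (gz c)) < 0 := by
  have : 0 < D3 b a c := by simp only [D3] at *; linarith
  have := phi_pos h hb ha hc this
  rw [orient_swap] at this; linarith

lemma phi_inj {m : ℕ} {ε : ℝ} {f : ℝ × ℝ → ℝ × ℝ} (h : IsSquaredHorton m ε f) {a b : ℤ × ℤ}
    (ha : a ∈ GZ m) (hb : b ∈ GZ m) (he : f (gz a) = f (gz b)) : a = b :=
  gz_inj (h.inj (gz_mem ha) (gz_mem hb) he)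

lemma phi_close {m : ℕ} {ε : ℝ} {f : ℝ × ℝ → ℝ × ℝ} (h : IsSquaredHorton m ε f) {a : ℤ × ℤ}
    (ha : a ∈ GZ m) : |(f (gz a)).1 - a.1| < 1 / 4 ∧ |(f (gz a)).2 - a.2| < 1 / 4 := by
  have h1 := h.close _ (gz_mem ha)
  have h2 := h.eps_lt
  unfold elen at h1
  constructor
  · refine lt_of_le_of_lt (le_trans (Real.abs_le_sqrt ?_) h1) h2
    simp only [gz]; nlinarith [sq_nonneg ((f (gz a)).2 - a.2)]
  · refine lt_of_le_of_lt (le_trans (Real.abs_le_sqrt ?_) h1) h2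
    simp only [gz]; nlinarith [sq_nonneg ((f (gz a)).1 - a.1)]

def zline (m : ℕ) (v : ℤ × ℤ) (i : ℤ) : Finset (ℤ × ℤ) := (GZ m).filter fun p => det v p = i

lemma mem_zline {m : ℕ} {v : ℤ × ℤ} {i : ℤ} {p : ℤ × ℤ} :
    p ∈ zline m v i ↔ p ∈ GZ m ∧ det v p = i := by simp [zline]

lemma D3_id1 (v a b c : ℤ × ℤ) (h : det v a = det v b) :
    v.1 * D3 a b c = (b.1 - a.1) * (det v c - det v a) := by
  simp only [D3, det] at *; linear_combination (c.1 - a.1) * h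

lemma D3_id2 (v a b c : ℤ × ℤ) (h : det v a = det v b) :
    v.2 * D3 a b c = (b.2 - a.2) * (det v c - det v a) := by
  simp only [D3, det] at *; linear_combination (c.2 - a.2) * h

lemma eq_of_fst {v a b : ℤ × ℤ} (hv : v.1 ≠ 0) (h : det v a = det v b) (h1 : a.1 = b.1) : a = b := by
  refine Prod.ext h1 (mul_left_cancel₀ hv ?_)
  simp only [det] at h; rw [h1] at h; linarith

lemma eq_of_snd {v a b : ℤ × ℤ} (hv : v.2 ≠ 0) (h : det v a = det v b) (h1 : a.2 = b.2) : a = b := by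
  refine Prod.ext (mul_left_cancel₀ hv ?_) h1
  simp only [det] at h; rw [h1] at h; linarith

lemma D3_zero_iff {v a b c : ℤ × ℤ} (hv : v ≠ 0) (hab : a ≠ b) (h : det v a = det v b) :
    D3 a b c = 0 ↔ det v c = det v a := by
  by_cases h1 : v.1 = 0
  · have h2 : v.2 ≠ 0 := fun h2 => hv (Prod.ext h1 h2)
    have hb : b.2 - a.2 ≠ 0 := fun hb => hab (eq_of_snd h2 h (by linarith))
    have := D3_id2 v a b c h
    constructor
    · intro h0
      rw [h0, mul_zero] at this
      rcases mul_eq_zero.1 this.symm with h | h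
      · exact absurd h hb
      · linarith
    · intro h0
      rw [h0, sub_self, mul_zero] at this
      exact (mul_eq_zero.1 this).resolve_left h2
  · have hb : b.1 - a.1 ≠ 0 := fun hb => hab (eq_of_fst h1 h (by linarith))
    have := D3_id1 v a b c h
    constructor
    · intro h0
      rw [h0, mul_zero] at this
      rcases mul_eq_zero.1 this.symm with h | h
      · exact absurd h hb
      · linarith
    · intro h0
      rw [h0, sub_self, mul_zero] at this
      exact (mul_eq_zero.1 this).resolve_left h1

lemma gridLine_eq {m : ℕ} {v a b : ℤ × ℤ} {i : ℤ} (hv : v ≠ 0) (ha : a ∈ zline m v i)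
    (hb : b ∈ zline m v i) (hab : a ≠ b) :
    gridLine m (gz a) (gz b) = (zline m v i).image gz := by
  rw [mem_zline] at ha hb
  have hd : det v a = det v b := by rw [ha.2, hb.2]
  ext x
  simp only [gridLine, grid_eq, Finset.mem_filter, Finset.mem_image, mem_zline]
  constructor
  · rintro ⟨⟨p, hp, rfl⟩, hc⟩
    have := orient_of_collinear hc
    rw [orient_gz] at this
    have h0 : D3 a b p = 0 := by exact_mod_cast this
    refine ⟨p, ⟨hp, ?_⟩, rfl⟩
    rw [(D3_zero_iff hv hab hd).1 h0, ha.2]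
  · rintro ⟨p, ⟨hp, hi⟩, rfl⟩
    refine ⟨⟨p, hp, rfl⟩, collinear_of_orient (gz_inj.ne hab) ?_⟩
    rw [orient_gz, (D3_zero_iff hv hab hd).2 (by rw [hi, ha.2])]; simp

lemma line_horton {m : ℕ} {ε : ℝ} {f : ℝ × ℝ → ℝ × ℝ} (h : IsSquaredHorton m ε f) {v a b : ℤ × ℤ}
    {i : ℤ} (hv : v ≠ 0) (ha : a ∈ zline m v i) (hb : b ∈ zline m v i) (hab : a ≠ b) :
    ∃ ρ : ℝ × ℝ → ℝ × ℝ, (∀ x y z, orient (ρ x) (ρ y) (ρ z) = orient x y z) ∧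
      Function.Injective ρ ∧ IsHorton ((zline m v i).image fun p => ρ (f (gz p))) ∧
      ∀ c ∈ GZ m, i < det v c →
        (∀ a ∈ zline m v i, ∀ b ∈ zline m v i, (ρ (f (gz a))).1 < (ρ (f (gz b))).1 →
          0 < orient (f (gz a)) (f (gz b)) (f (gz c))) ∨
        (∀ a ∈ zline m v i, ∀ b ∈ zline m v i, (ρ (f (gz a))).1 < (ρ (f (gz b))).1 →
          orient (f (gz a)) (f (gz b)) (f (gz c)) < 0) := by
  have hgl := gridLine_eq hv ha hb hab
  rw [mem_zline] at ha hb
  have hd : det v a = det v b := by rw [ha.2, hb.2]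
  by_cases h1 : v.1 = 0
  · have h2 : v.2 ≠ 0 := fun h2 => hv (Prod.ext h1 h2)
    have hab1 : a.1 = b.1 := by
      simp only [det, h1] at hd
      exact mul_left_cancel₀ h2 (by linarith)
    refine ⟨rotCW, ?_, ?_, ?_, ?_⟩
    · intro x y z; simp only [orient, rotCW]; ring
    · intro x y hxy
      simp only [rotCW, Prod.mk.injEq, neg_inj] at hxy
      exact Prod.ext hxy.2 hxy.1
    · have := h.vertical _ (gz_mem ha.1) _ (gz_mem hb.1) (gz_inj.ne hab) (by simp [gz, hab1])
      rw [hgl, Finset.image_image, Finset.image_image] at this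
      exact this
    · intro c hc hi
      have ord : ∀ a ∈ zline m v i, ∀ b ∈ zline m v i, (rotCW (f (gz a))).1 < (rotCW (f (gz b))).1 →
          a.2 < b.2 := by
        intro a ha b hb hlt
        rw [mem_zline] at ha hb
        have ca := abs_lt.1 (phi_close h ha.1).2
        have cb := abs_lt.1 (phi_close h hb.1).2
        by_contra hn
        rcases eq_or_lt_of_le (not_lt.1 hn) with he | he
        · rw [eq_of_snd h2 (by rw [ha.2, hb.2]) he.symm] at hlt
          exact lt_irrefl _ hlt
        · have : (b.2 : ℝ) + 1 ≤ a.2 := by exact_mod_cast he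
          simp only [rotCW] at hlt
          linarith
      rcases lt_or_gt_of_ne h2 with h3 | h3
      · right
        intro a ha b hb hlt
        have := ord a ha b hb hlt
        rw [mem_zline] at ha hb
        apply phi_neg h ha.1 hb.1 hc
        have id := D3_id2 v a b c (by rw [ha.2, hb.2])
        have : 0 < v.2 * D3 a b c := by rw [id, ha.2]; exact mul_pos (by linarith) (by linarith)
        exact neg_of_mul_pos_right this h3.le
      · left
        intro a ha b hb hlt
        have := ord a ha b hb hlt
        rw [mem_zline] at ha hb
        apply phi_pos h ha.1 hb.1 hc
        have id := D3_id2 v a b c (by rw [ha.2, hb.2])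
        have : 0 < v.2 * D3 a b c := by rw [id, ha.2]; exact mul_pos (by linarith) (by linarith)
        exact pos_of_mul_pos_right this h3.le
  · have hab1 : a.1 ≠ b.1 := fun h3 => hab (eq_of_fst h1 hd h3)
    refine ⟨id, fun _ _ _ => rfl, Function.injective_id, ?_, ?_⟩
    · have := h.nonvertical _ (gz_mem ha.1) _ (gz_mem hb.1) (gz_inj.ne hab) (by simpa [gz] using hab1)
      rw [hgl, Finset.image_image] at this
      exact this
    · intro c hc hi
      have ord : ∀ a ∈ zline m v i, ∀ b ∈ zline m v i, (id (f (gz a))).1 < (id (f (gz b))).1 →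
          a.1 < b.1 := by
        intro a ha b hb hlt
        rw [mem_zline] at ha hb
        have ca := abs_lt.1 (phi_close h ha.1).1
        have cb := abs_lt.1 (phi_close h hb.1).1
        by_contra hn
        rcases eq_or_lt_of_le (not_lt.1 hn) with he | he
        · rw [eq_of_fst h1 (by rw [ha.2, hb.2]) he.symm] at hlt
          exact lt_irrefl _ hlt
        · have : (b.1 : ℝ) + 1 ≤ a.1 := by exact_mod_cast he
          simp only [id] at hlt
          linarith
      rcases lt_or_gt_of_ne h1 with h3 | h3
      · right
        intro a ha b hb hlt
        have := ord a ha b hb hlt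
        rw [mem_zline] at ha hb
        apply phi_neg h ha.1 hb.1 hc
        have id := D3_id1 v a b c (by rw [ha.2, hb.2])
        have : 0 < v.1 * D3 a b c := by rw [id, ha.2]; exact mul_pos (by linarith) (by linarith)
        exact neg_of_mul_pos_right this h3.le
      · left
        intro a ha b hb hlt
        have := ord a ha b hb hlt
        rw [mem_zline] at ha hb
        apply phi_pos h ha.1 hb.1 hc
        have id := D3_id1 v a b c (by rw [ha.2, hb.2])
        have : 0 < v.1 * D3 a b c := by rw [id, ha.2]; exact mul_pos (by linarith) (by linarith)
        exact pos_of_mul_pos_right this h3.le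

def TT (m : ℕ) (f : ℝ × ℝ → ℝ × ℝ) (q : ℝ × ℝ) : Finset ((ℤ × ℤ) × (ℤ × ℤ) × (ℤ × ℤ)) :=
  (GZ m ×ˢ GZ m ×ˢ GZ m).filter fun t =>
    0 < orient (f (gz t.1)) (f (gz t.2.1)) (f (gz t.2.2)) ∧
    Ins (f (gz t.1)) (f (gz t.2.1)) (f (gz t.2.2)) q ∧
    ∀ p ∈ GZ m, ¬ Ins (f (gz t.1)) (f (gz t.2.1)) (f (gz t.2.2)) (f (gz p))

lemma mem_TT {m : ℕ} {f : ℝ × ℝ → ℝ × ℝ} {q : ℝ × ℝ} {a b c : ℤ × ℤ} : (a, b, c) ∈ TT m f q ↔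
    (a ∈ GZ m ∧ b ∈ GZ m ∧ c ∈ GZ m) ∧ 0 < orient (f (gz a)) (f (gz b)) (f (gz c)) ∧
    Ins (f (gz a)) (f (gz b)) (f (gz c)) q ∧
    ∀ p ∈ GZ m, ¬ Ins (f (gz a)) (f (gz b)) (f (gz c)) (f (gz p)) := by
  simp [TT]

lemma TT_rot {m : ℕ} {f : ℝ × ℝ → ℝ × ℝ} {q : ℝ × ℝ} {a b c : ℤ × ℤ} (h : (a, b, c) ∈ TT m f q) :
    (b, c, a) ∈ TT m f q := by
  rw [mem_TT] at *
  refine ⟨⟨h.1.2.1, h.1.2.2, h.1.1⟩, by rw [← orient_rot]; exact h.2.1, Ins_rot.1 h.2.2.1,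
    fun p hp hi => h.2.2.2 p hp (Ins_rot.2 hi)⟩

def FF (m : ℕ) (f : ℝ × ℝ → ℝ × ℝ) (q : ℝ × ℝ) (v : ℤ × ℤ) :
    Finset ((ℤ × ℤ) × (ℤ × ℤ) × (ℤ × ℤ)) :=
  (TT m f q).filter fun t => (∃ d : ℤ, 0 < d ∧ t.2.1.1 - t.1.1 = d * v.1 ∧ t.2.1.2 - t.1.2 = d * v.2) ∧
    0 ≤ det v t.2.2 - det v t.1 ∧ det v t.2.2 - det v t.1 ≤ 2

lemma cell_bound {m : ℕ} {ε : ℝ} {f : ℝ × ℝ → ℝ × ℝ} (h : IsSquaredHorton m ε f) (q : ℝ × ℝ)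
    {v : ℤ × ℤ} (hv : v ≠ 0) (K L : ℕ) (hK : ∀ i, (zline m v i).card ≤ K) (hL : K ≤ 2 ^ L)
    (i j : ℤ) (hj : 0 ≤ j) (S : Finset ((ℤ × ℤ) × (ℤ × ℤ) × (ℤ × ℤ)))
    (hS : ∀ t ∈ S, t ∈ TT m f q ∧ det v t.1 = i ∧ det v t.2.1 = i ∧ det v t.2.2 = i + j) :
    S.card ≤ 3 * K * L ^ 2 := by
  rcases S.eq_empty_or_nonempty with rfl | ⟨⟨a, b, c⟩, ht⟩
  · simp
  obtain ⟨h1, h2, h3, h4⟩ := hS _ ht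
  rw [mem_TT] at h1
  obtain ⟨ρ, ho, hi, hH, hs⟩ := line_horton h (i := i) hv (mem_zline.2 ⟨h1.1.1, h2⟩)
    (mem_zline.2 ⟨h1.1.2.1, h3⟩) (by rintro rfl; exact (orient_ne h1.2.1).1 rfl)
  clear ht h1 h2 h3 h4
  have hρ : ∀ {x y z w}, Ins (ρ x) (ρ y) (ρ z) (ρ w) ↔ Ins x y z w := by
    intro x y z w; simp only [Ins, ho]
  have hc : ((zline m v i).image fun p => ρ (f (gz p))).card ≤ K := Finset.card_image_le.trans (hK i)
  let F : (ℤ × ℤ) × (ℤ × ℤ) × (ℤ × ℤ) → (ℝ × ℝ) × (ℝ × ℝ) × (ℝ × ℝ) :=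
    fun t => (ρ (f (gz t.1)), ρ (f (gz t.2.1)), ρ (f (gz t.2.2)))
  have hF : (S.image F).card = S.card := by
    apply Finset.card_image_of_injOn
    rintro ⟨a, b, c⟩ ht ⟨a', b', c'⟩ ht' he
    have u := (mem_TT.1 (hS _ ht).1).1
    have u' := (mem_TT.1 (hS _ ht').1).1
    simp only [F, Prod.mk.injEq] at he
    rw [phi_inj h u.1 u'.1 (hi he.1), phi_inj h u.2.1 u'.2.1 (hi he.2.1),
      phi_inj h u.2.2 u'.2.2 (hi he.2.2)]
  rw [← hF]
  rcases eq_or_lt_of_le hj with rfl | hj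
  · have hsub : S.image F ⊆ Tri ((zline m v i).image fun p => ρ (f (gz p))) (ρ q) := by
      intro x hx
      obtain ⟨⟨a, b, c⟩, ht, rfl⟩ := Finset.mem_image.1 hx
      obtain ⟨h1, h2, h3, h4⟩ := hS _ ht
      rw [mem_TT] at h1
      rw [add_zero] at h4
      simp only [F]
      rw [mem_Tri]
      refine ⟨⟨Finset.mem_image.2 ⟨a, mem_zline.2 ⟨h1.1.1, h2⟩, rfl⟩,
        Finset.mem_image.2 ⟨b, mem_zline.2 ⟨h1.1.2.1, h3⟩, rfl⟩,
        Finset.mem_image.2 ⟨c, mem_zline.2 ⟨h1.1.2.2, h4⟩, rfl⟩⟩, ?_, hρ.2 h1.2.2.1, ?_⟩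
      · rw [ho]; exact h1.2.1
      · intro p hp
        obtain ⟨p0, hp0, rfl⟩ := Finset.mem_image.1 hp
        rw [hρ]
        exact h1.2.2.2 p0 (mem_zline.1 hp0).1
    refine (Finset.card_le_card hsub).trans ((tri_bound hH _ L (hc.trans hL)).trans ?_)
    gcongr
  · have := fanC hH L (hc.trans hL) (ρ q) ((zline m v (i + j)).image fun p => ρ (f (gz p)))
      (by
        intro c0 hc0
        obtain ⟨c, hc1, rfl⟩ := Finset.mem_image.1 hc0
        rw [mem_zline] at hc1
        refine (hs c hc1.1 (by omega)).imp ?_ ?_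
        · intro H a0 ha0 b0 hb0 hab
          obtain ⟨a, ha, rfl⟩ := Finset.mem_image.1 ha0
          obtain ⟨b, hb, rfl⟩ := Finset.mem_image.1 hb0
          rw [ho]; exact H a ha b hb hab
        · intro H a0 ha0 b0 hb0 hab
          obtain ⟨a, ha, rfl⟩ := Finset.mem_image.1 ha0
          obtain ⟨b, hb, rfl⟩ := Finset.mem_image.1 hb0
          rw [ho]; exact H a ha b hb hab)
      (S.image F)
      (by
        intro x hx
        obtain ⟨⟨a, b, c⟩, ht, rfl⟩ := Finset.mem_image.1 hx
        obtain ⟨h1, h2, h3, h4⟩ := hS _ ht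
        rw [mem_TT] at h1
        simp only [F]
        refine ⟨Finset.mem_image.2 ⟨a, mem_zline.2 ⟨h1.1.1, h2⟩, rfl⟩,
          Finset.mem_image.2 ⟨b, mem_zline.2 ⟨h1.1.2.1, h3⟩, rfl⟩,
          Finset.mem_image.2 ⟨c, mem_zline.2 ⟨h1.1.2.2, h4⟩, rfl⟩, ?_, hρ.2 h1.2.2.1, ?_⟩
        · rw [ho]; exact h1.2.1
        · intro p hp
          obtain ⟨p0, hp0, rfl⟩ := Finset.mem_image.1 hp
          rw [hρ]
          exact h1.2.2.2 p0 (mem_zline.1 hp0).1)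
    refine this.trans ?_
    have h5 : ((zline m v (i + j)).image fun p => ρ (f (gz p))).card ≤ K :=
      Finset.card_image_le.trans (hK _)
    calc L * ((zline m v (i + j)).image fun p => ρ (f (gz p))).card ≤ L ^ 2 * K := by
          gcongr; nlinarith
      _ ≤ 3 * K * L ^ 2 := by nlinarith [Nat.zero_le (L ^ 2 * K)]

lemma window {m : ℕ} {ε : ℝ} {f : ℝ × ℝ → ℝ × ℝ} (h : IsSquaredHorton m ε f) (q : ℝ × ℝ)
    {v : ℤ × ℤ} {a b c a' b' c' : ℤ × ℤ}
    (ht : (a, b, c) ∈ FF m f q v) (ht' : (a', b', c') ∈ FF m f q v) : det v a' ≤ det v a + 2 := by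
  by_contra hn
  push Not at hn
  simp only [FF, Finset.mem_filter, mem_TT] at ht ht'
  obtain ⟨⟨hm, h0, hq, -⟩, ⟨d, hd, hd1, hd2⟩, hh0, hh2⟩ := ht
  obtain ⟨⟨hm', h0', hq', -⟩, ⟨d', hd', hd1', hd2'⟩, hh0', hh2'⟩ := ht'
  have key : ∀ p ∈ GZ m, det v p < det v a' →
      orient (f (gz a')) (f (gz b')) (f (gz p)) < 0 := by
    intro p hp hlt
    apply phi_neg h hm'.1 hm'.2.1 hp
    have : D3 a' b' p = d' * (det v p - det v a') := by
      simp only [D3, det]; rw [hd1', hd2']; ring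
    rw [this]
    exact mul_neg_of_pos_of_neg hd' (by linarith)
  have hb : det v b = det v a := by
    simp only [det]; linear_combination v.1 * hd2 - v.2 * hd1
  have k1 := key a hm.1 (by omega)
  have k2 := key b hm.2.1 (by omega)
  have k3 := key c hm.2.2 (by omega)
  have id := bary (f (gz a)) (f (gz b)) (f (gz c)) (f (gz a')) (f (gz b')) q
  have m0 := mul_pos h0 hq'.1
  have m1 := mul_neg_of_pos_of_neg hq.2.1 k1
  have m2 := mul_neg_of_pos_of_neg hq.2.2 k2
  have m3 := mul_neg_of_pos_of_neg hq.1 k3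
  linarith

lemma FF_bound {m : ℕ} {ε : ℝ} {f : ℝ × ℝ → ℝ × ℝ} (h : IsSquaredHorton m ε f) (q : ℝ × ℝ)
    {v : ℤ × ℤ} (hv : v ≠ 0) (K L : ℕ) (hK : ∀ i, (zline m v i).card ≤ K) (hL : K ≤ 2 ^ L) :
    (FF m f q v).card ≤ 27 * K * L ^ 2 := by
  rcases (FF m f q v).eq_empty_or_nonempty with h0 | hne
  · simp [h0]
  obtain ⟨t0, ht0, hmin⟩ := Finset.exists_min_image (FF m f q v) (fun t => det v t.1) hne
  have := Finset.card_le_mul_card_image_of_maps_to (s := FF m f q v)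
    (f := fun t => (det v t.1, det v t.2.2 - det v t.1))
    (t := Finset.Icc (det v t0.1) (det v t0.1 + 2) ×ˢ Finset.Icc (0 : ℤ) 2)
    (by
      rintro t ht
      have h1 := hmin t ht
      have h2 := window h q ht0 ht
      simp only [FF, Finset.mem_filter] at ht
      simp only [Finset.mem_product, Finset.mem_Icc]
      exact ⟨⟨h1, h2⟩, ht.2.2.1, ht.2.2.2⟩) (3 * K * L ^ 2)
    (by
      rintro ⟨i, j⟩ hij
      simp only [Finset.mem_product, Finset.mem_Icc] at hij
      apply cell_bound h q hv K L hK hL i j hij.2.1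
      rintro ⟨a, b, c⟩ ht
      simp only [FF, Finset.mem_filter, Prod.mk.injEq] at ht
      obtain ⟨⟨ht, ⟨d, hd, hd1, hd2⟩, -⟩, h1, h2⟩ := ht
      refine ⟨ht, h1, ?_, by simp only; omega⟩
      rw [← h1]
      simp only [det]; linear_combination v.1 * hd2 - v.2 * hd1)
  refine this.trans (le_of_eq ?_)
  rw [Finset.card_product, Int.card_Icc, Int.card_Icc]
  have : (det v t0.1 + 2 + 1 - det v t0.1).toNat = 3 := by
    rw [show det v t0.1 + 2 + 1 - det v t0.1 = 3 by ring]; rfl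
  rw [this]
  simp; ring

lemma inside_grid {m : ℕ} {a b c p : ℤ × ℤ} (ha : a ∈ GZ m) (hb : b ∈ GZ m) (hc : c ∈ GZ m)
    (h1 : 0 < D3 a b p) (h2 : 0 < D3 b c p) (h3 : 0 < D3 c a p) : p ∈ GZ m := by
  have e1 : (D3 a b p + D3 b c p + D3 c a p) * p.1 = D3 b c p * a.1 + D3 c a p * b.1 + D3 a b p * c.1 := by
    simp only [D3]; ring
  have e2 : (D3 a b p + D3 b c p + D3 c a p) * p.2 = D3 b c p * a.2 + D3 c a p * b.2 + D3 a b p * c.2 := by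
    simp only [D3]; ring
  rw [mem_GZ] at *
  generalize D3 a b p = x at *
  generalize D3 b c p = y at *
  generalize D3 c a p = z at *
  have hs : 0 < x + y + z := by omega
  refine ⟨⟨?_, ?_⟩, ?_, ?_⟩
  · refine le_of_mul_le_mul_left ?_ hs; rw [e1]; nlinarith
  · refine le_of_mul_le_mul_left ?_ hs; rw [e1]; nlinarith
  · refine le_of_mul_le_mul_left ?_ hs; rw [e2]; nlinarith
  · refine le_of_mul_le_mul_left ?_ hs; rw [e2]; nlinarith

lemma pick_dir {m : ℕ} {ε : ℝ} {f : ℝ × ℝ → ℝ × ℝ} (h : IsSquaredHorton m ε f) {q : ℝ × ℝ}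
    {a b c : ℤ × ℤ} (ht : (a, b, c) ∈ TT m f q)
    (h1 : Int.gcd (c.1 - b.1) (c.2 - b.2) ≤ Int.gcd (b.1 - a.1) (b.2 - a.2))
    (h2 : Int.gcd (a.1 - c.1) (a.2 - c.2) ≤ Int.gcd (b.1 - a.1) (b.2 - a.2)) :
    ∃ v : ℤ × ℤ, IsCoprime v.1 v.2 ∧ max v.1.natAbs v.2.natAbs ∈ Finset.Icc 1 m ∧
      (a, b, c) ∈ FF m f q v := by
  have ht' := ht
  rw [mem_TT] at ht
  obtain ⟨⟨ha, hb, hc⟩, h0, hq, he⟩ := ht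
  have hab : a ≠ b := by rintro rfl; exact (orient_ne h0).1 rfl
  have hg : 0 < Int.gcd (b.1 - a.1) (b.2 - a.2) := by
    rw [Nat.pos_iff_ne_zero]
    intro hg
    rw [Int.gcd_eq_zero_iff] at hg
    exact hab (Prod.ext (by omega) (by omega))
  obtain ⟨v1, v2, hv, e1, e2⟩ := Int.exists_gcd_one hg
  set d := Int.gcd (b.1 - a.1) (b.2 - a.2) with hd
  clear_value d
  have hcop : IsCoprime v1 v2 := Int.isCoprime_iff_gcd_eq_one.2 hv
  refine ⟨(v1, v2), hcop, ?_, ?_⟩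
  · rw [mem_GZ] at ha hb
    have hne : ¬ (v1 = 0 ∧ v2 = 0) := by
      rintro ⟨rfl, rfl⟩; simp at hv
    have b1 : v1.natAbs ≤ m := by
      have : v1.natAbs ≤ (b.1 - a.1).natAbs := by
        rw [e1, Int.natAbs_mul, Int.natAbs_natCast]; exact Nat.le_mul_of_pos_right _ hg
      omega
    have b2 : v2.natAbs ≤ m := by
      have : v2.natAbs ≤ (b.2 - a.2).natAbs := by
        rw [e2, Int.natAbs_mul, Int.natAbs_natCast]; exact Nat.le_mul_of_pos_right _ hg
      omega
    simp only [Finset.mem_Icc]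
    omega
  · simp only [FF, Finset.mem_filter]
    have hd0 : (0 : ℤ) < d := by exact_mod_cast hg
    have hD : ∀ p, D3 a b p = d * (det (v1, v2) p - det (v1, v2) a) := by
      intro p; simp only [D3, det]; rw [e1, e2]; ring
    refine ⟨ht', ⟨d, hd0, by rw [e1, mul_comm], by rw [e2, mul_comm]⟩, ?_, ?_⟩
    · by_contra hn
      push Not at hn
      have := phi_neg h ha hb hc (by rw [hD]; exact mul_neg_of_pos_of_neg hd0 hn)
      linarith
    · by_contra hn
      push Not at hn
      obtain ⟨p, p1, p2, p3⟩ := lattice_aux a b c (v1, v2) d hd0 hcop (by rw [e1, mul_comm])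
        (by rw [e2, mul_comm]) (by exact_mod_cast h1) (by exact_mod_cast h2)
        (by simp only [det, Prod.fst_sub, Prod.snd_sub] at *; linarith)
      have hp := inside_grid ha hb hc p1 p2 p3
      exact he p hp ⟨phi_pos h ha hb hp p1, phi_pos h hb hc hp p2, phi_pos h hc ha hp p3⟩

lemma line_card {m r : ℕ} {v : ℤ × ℤ} (hv : IsCoprime v.1 v.2)
    (hr : max v.1.natAbs v.2.natAbs = r) (hr0 : 1 ≤ r) (i : ℤ) :
    (zline m v i).card ≤ m / r + 1 := by
  have hc : (Finset.Icc (0 : ℤ) ((m / r : ℕ) : ℤ)).card = m / r + 1 := by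
    generalize m / r = k
    rw [Int.card_Icc]; omega
  have quot : ∀ x : ℤ, 1 ≤ x → x ≤ m → x / r ∈ Finset.Icc (0 : ℤ) ((m / r : ℕ) : ℤ) := by
    intro x h1 h2
    rw [Finset.mem_Icc]
    refine ⟨Int.ediv_nonneg (by omega) (by omega), ?_⟩
    rw [Int.natCast_div]
    exact Int.ediv_le_ediv (by omega) h2
  have qeq : ∀ x y : ℤ, x / r = y / r → (r : ℤ) ∣ x - y → x = y := by
    intro x y h1 h2
    have : x % r = y % r := (Int.modEq_iff_dvd.2 h2 : y ≡ x [ZMOD r]).symm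
    rw [← Int.emod_add_mul_ediv x r, ← Int.emod_add_mul_ediv y r, h1, this]
  rw [← hc]
  rcases max_choice v.1.natAbs v.2.natAbs with hm | hm
  · rw [hm] at hr
    have hv0 : v.1 ≠ 0 := by omega
    apply Finset.card_le_card_of_injOn (fun p => p.1 / (r : ℤ))
    · intro p hp
      have hp := (mem_zline.1 hp).1
      rw [mem_GZ] at hp
      exact quot _ hp.1.1 hp.1.2
    · intro p hp p' hp' he
      have hp := (mem_zline.1 hp).2
      have hp' := (mem_zline.1 hp').2
      have hdv : v.1 ∣ p.1 - p'.1 := by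
        apply hv.dvd_of_dvd_mul_left
        refine ⟨p.2 - p'.2, ?_⟩
        simp only [det] at hp hp'; linarith
      refine eq_of_fst hv0 (hp.trans hp'.symm) (qeq _ _ he ?_)
      rw [← hr]; exact Int.natAbs_dvd.2 hdv
  · rw [hm] at hr
    have hv0 : v.2 ≠ 0 := by omega
    apply Finset.card_le_card_of_injOn (fun p => p.2 / (r : ℤ))
    · intro p hp
      have hp := (mem_zline.1 hp).1
      rw [mem_GZ] at hp
      exact quot _ hp.2.1 hp.2.2
    · intro p hp p' hp' he
      have hp := (mem_zline.1 hp).2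
      have hp' := (mem_zline.1 hp').2
      have hdv : v.2 ∣ p.2 - p'.2 := by
        apply hv.symm.dvd_of_dvd_mul_left
        refine ⟨p.1 - p'.1, ?_⟩
        simp only [det] at hp hp'; linarith
      refine eq_of_snd hv0 (hp.trans hp'.symm) (qeq _ _ he ?_)
      rw [← hr]; exact Int.natAbs_dvd.2 hdv

def VV (r : ℕ) : Finset (ℤ × ℤ) :=
  ((({-(r : ℤ), (r : ℤ)} : Finset ℤ) ×ˢ Finset.Icc (-(r : ℤ)) r) ∪
    (Finset.Icc (-(r : ℤ)) r ×ˢ ({-(r : ℤ), (r : ℤ)} : Finset ℤ))).filter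
    fun v => IsCoprime v.1 v.2 ∧ max v.1.natAbs v.2.natAbs = r

lemma mem_VV {r : ℕ} {v : ℤ × ℤ} : v ∈ VV r ↔ IsCoprime v.1 v.2 ∧ max v.1.natAbs v.2.natAbs = r := by
  simp only [VV, Finset.mem_filter, and_iff_right_iff_imp, Finset.mem_union, Finset.mem_product,
    Finset.mem_insert, Finset.mem_singleton, Finset.mem_Icc]
  rintro ⟨-, h⟩
  omega

lemma card_VV {r : ℕ} (hr : 1 ≤ r) : (VV r).card ≤ 12 * r := by
  have h2 : ({-(r : ℤ), (r : ℤ)} : Finset ℤ).card ≤ 2 := Finset.card_le_two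
  have h3 : (Finset.Icc (-(r : ℤ)) r).card = 2 * r + 1 := by rw [Int.card_Icc]; omega
  refine (Finset.card_filter_le _ _).trans ((Finset.card_union_le _ _).trans ?_)
  rw [Finset.card_product, Finset.card_product, h3]
  nlinarith

lemma stab_subset {m : ℕ} {ε : ℝ} {f : ℝ × ℝ → ℝ × ℝ} (h : IsSquaredHorton m ε f) (q : ℝ × ℝ)
    (t : Finset (ℝ × ℝ)) (ht : IsEmptyTriangleOf ↑((grid m).image f) t)
    (hq : q ∈ interior (convexHull ℝ (↑t : Set (ℝ × ℝ)))) :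
    ∃ a b c, (a, b, c) ∈ TT m f q ∧ t = {f (gz a), f (gz b), f (gz c)} := by
  obtain ⟨h3, hsub, hcol, hemp⟩ := ht
  obtain ⟨x, y, z, hxy, hxz, hyz, rfl⟩ := Finset.card_eq_three.1 h3
  have mem : ∀ w ∈ ({x, y, z} : Finset (ℝ × ℝ)), ∃ a ∈ GZ m, f (gz a) = w := by
    intro w hw
    have := hsub hw
    simp only [grid_eq, Finset.coe_image, Set.mem_image, Finset.mem_coe] at this
    obtain ⟨_, ⟨a, ha, rfl⟩, rfl⟩ := this
    exact ⟨a, ha, rfl⟩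
  obtain ⟨a, ha, rfl⟩ := mem x (by simp)
  obtain ⟨b, hb, rfl⟩ := mem y (by simp)
  obtain ⟨c, hc, rfl⟩ := mem z (by simp)
  have main : ∀ a b c, a ∈ GZ m → b ∈ GZ m → c ∈ GZ m → 0 < orient (f (gz a)) (f (gz b)) (f (gz c)) →
      q ∈ interior (convexHull ℝ ({f (gz a), f (gz b), f (gz c)} : Set (ℝ × ℝ))) →
      (∀ p ∈ (grid m).image f, p ∉ interior (convexHull ℝ ({f (gz a), f (gz b), f (gz c)} : Set (ℝ × ℝ)))) →
      (a, b, c) ∈ TT m f q := by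
    intro a b c ha hb hc ho hq he
    rw [mem_TT]
    refine ⟨⟨ha, hb, hc⟩, ho, ins_of_interior ho hq, ?_⟩
    intro p hp hi
    exact he _ (Finset.mem_image_of_mem _ (gz_mem hp)) (interior_of_ins hi)
  have hs : ((({f (gz a), f (gz b), f (gz c)} : Finset (ℝ × ℝ))) : Set (ℝ × ℝ)) =
      {f (gz a), f (gz b), f (gz c)} := by simp
  rw [hs] at hq hcol hemp
  have ho : orient (f (gz a)) (f (gz b)) (f (gz c)) ≠ 0 := fun h0 => hcol (collinear_of_orient hxy h0)
  rcases lt_or_gt_of_ne ho with ho | ho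
  · refine ⟨b, a, c, main b a c hb ha hc (by rw [orient_swap]; linarith) ?_ ?_, ?_⟩
    · rw [Set.insert_comm]; exact hq
    · rw [Set.insert_comm]; exact hemp
    · rw [Finset.insert_comm]
  · exact ⟨a, b, c, main a b c ha hb hc ho hq hemp, rfl⟩

lemma stab_cover {m : ℕ} {ε : ℝ} {f : ℝ × ℝ → ℝ × ℝ} (h : IsSquaredHorton m ε f) (q : ℝ × ℝ) :
    {t : Finset (ℝ × ℝ) | IsEmptyTriangleOf ↑((grid m).image f) t ∧
      q ∈ interior (convexHull ℝ (↑t : Set (ℝ × ℝ)))} ⊆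
    ↑((Finset.Icc 1 m).biUnion fun r => (VV r).biUnion fun v =>
      (FF m f q v).image fun t => ({f (gz t.1), f (gz t.2.1), f (gz t.2.2)} : Finset (ℝ × ℝ))) := by
  rintro t ⟨ht, hq⟩
  obtain ⟨a, b, c, habc, rfl⟩ := stab_subset h q t ht hq
  have fin : ∀ a b c, (a, b, c) ∈ TT m f q →
      Int.gcd (c.1 - b.1) (c.2 - b.2) ≤ Int.gcd (b.1 - a.1) (b.2 - a.2) →
      Int.gcd (a.1 - c.1) (a.2 - c.2) ≤ Int.gcd (b.1 - a.1) (b.2 - a.2) →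
      ({f (gz a), f (gz b), f (gz c)} : Finset (ℝ × ℝ)) ∈
      ((Finset.Icc 1 m).biUnion fun r => (VV r).biUnion fun v =>
      (FF m f q v).image fun t => ({f (gz t.1), f (gz t.2.1), f (gz t.2.2)} : Finset (ℝ × ℝ))) := by
    intro a b c ht h1 h2
    obtain ⟨v, v1, v2, v3⟩ := pick_dir h ht h1 h2
    simp only [Finset.mem_biUnion, Finset.mem_image]
    exact ⟨_, v2, v, mem_VV.2 ⟨v1, rfl⟩, _, v3, rfl⟩
  have r1 : ({f (gz b), f (gz c), f (gz a)} : Finset (ℝ × ℝ)) = {f (gz a), f (gz b), f (gz c)} := by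
    ext x; simp only [Finset.mem_insert, Finset.mem_singleton]; tauto
  have r2 : ({f (gz c), f (gz a), f (gz b)} : Finset (ℝ × ℝ)) = {f (gz a), f (gz b), f (gz c)} := by
    ext x; simp only [Finset.mem_insert, Finset.mem_singleton]; tauto
  have f0 := fin a b c habc
  have f1 := fin b c a (TT_rot habc)
  have f2 := fin c a b (TT_rot (TT_rot habc))
  rw [r1] at f1
  rw [r2] at f2
  rw [Finset.mem_coe]
  rcases le_total (Int.gcd (c.1 - b.1) (c.2 - b.2)) (Int.gcd (b.1 - a.1) (b.2 - a.2)) with u | u <;>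
  rcases le_total (Int.gcd (a.1 - c.1) (a.2 - c.2)) (Int.gcd (b.1 - a.1) (b.2 - a.2)) with w | w <;>
  rcases le_total (Int.gcd (a.1 - c.1) (a.2 - c.2)) (Int.gcd (c.1 - b.1) (c.2 - b.2)) with z | z <;>
  first
    | exact f0 (by omega) (by omega)
    | exact f1 (by omega) (by omega)
    | exact f2 (by omega) (by omega)

lemma stab_nat {m : ℕ} {ε : ℝ} {f : ℝ × ℝ → ℝ × ℝ} (h : IsSquaredHorton m ε f) (q : ℝ × ℝ) :
    stabbedCount ↑((grid m).image f) q ≤ ∑ r ∈ Finset.Icc 1 m,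
      12 * r * (27 * (m / r + 1) * (Nat.clog 2 (m / r + 1)) ^ 2) := by
  unfold stabbedCount
  refine (Set.ncard_le_ncard (stab_cover h q) (Finset.finite_toSet _)).trans ?_
  rw [Set.ncard_coe_finset]
  refine Finset.card_biUnion_le.trans (Finset.sum_le_sum ?_)
  intro r hr
  rw [Finset.mem_Icc] at hr
  refine (Finset.card_biUnion_le_card_mul _ _ (27 * (m / r + 1) * (Nat.clog 2 (m / r + 1)) ^ 2) ?_).trans
    (Nat.mul_le_mul_right _ (card_VV hr.1))
  intro v hv
  rw [mem_VV] at hv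
  refine Finset.card_image_le.trans ?_
  apply FF_bound h q _ _ _ (line_card hv.1 hv.2 hr.1) (Nat.le_pow_clog (by norm_num) _)
  rintro rfl
  have := hv.2
  simp at this
  omega

lemma pow4 (L : ℕ) : L ^ 4 ≤ 21 * 2 ^ L := by
  rcases Nat.lt_or_ge L 6 with h | h
  · interval_cases L <;> norm_num
  · induction L, h using Nat.le_induction with
    | base => norm_num
    | succ n hn ih =>
      have : (n + 1) ^ 4 ≤ 2 * n ^ 4 := by
        have h2 : 6 * (n + 1) ≤ 7 * n := by omega
        have h3 := Nat.pow_le_pow_left h2 4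
        rw [mul_pow, mul_pow] at h3
        norm_num at h3
        nlinarith [Nat.zero_le (n ^ 4)]
      rw [pow_succ 2]; omega

lemma term_bound {m r : ℕ} (h1 : 1 ≤ r) (h2 : r ≤ m) :
    ((12 * r * (27 * (m / r + 1) * (Nat.clog 2 (m / r + 1)) ^ 2) : ℕ) : ℝ) ≤
      6480 * m * (√m / √r) := by
  set K := m / r + 1 with hK
  set L := Nat.clog 2 K with hLdef
  have hK2 : 2 ≤ K := by
    have := Nat.div_pos h2 h1; omega
  have hrK : r * K ≤ 2 * m := by
    have := Nat.mul_div_le m r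
    rw [hK]; nlinarith
  have hLK : 2 ^ L ≤ 2 * K := by
    have hL0 : 0 < L := Nat.clog_pos (by norm_num) hK2
    have := Nat.pow_pred_clog_lt_self (b := 2) (by norm_num) (x := K) (by omega)
    rw [← hLdef] at this
    have e : 2 ^ L = 2 * 2 ^ (L.pred) := by
      rw [← pow_succ']; congr 1; rw [Nat.pred_eq_sub_one]; omega
    omega
  have h4 : L ^ 4 * r ≤ 84 * m := by
    have := pow4 L
    calc L ^ 4 * r ≤ (21 * (2 * K)) * r := by gcongr; omega
      _ = 42 * (r * K) := by ring
      _ ≤ 84 * m := by omega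
  have hr0 : (0 : ℝ) < r := by exact_mod_cast h1
  have h4' : (L : ℝ) ^ 4 * r ≤ 84 * m := by exact_mod_cast h4
  have hrK' : (r : ℝ) * K ≤ 2 * m := by exact_mod_cast hrK
  have hsq : (L : ℝ) ^ 2 ≤ 10 * (√m / √r) := by
    rw [← Real.sqrt_div (by positivity)]
    have : (L : ℝ) ^ 2 ≤ √(100 * (m / r)) := by
      apply Real.le_sqrt_of_sq_le
      rw [← mul_div_assoc, le_div_iff₀ hr0]
      have : (0 : ℝ) ≤ m := by positivity
      nlinarith
    rw [Real.sqrt_mul (by norm_num), show (100 : ℝ) = 10 ^ 2 by norm_num, Real.sqrt_sq (by norm_num)] at this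
    exact this
  push_cast
  calc 12 * (r : ℝ) * (27 * K * (L : ℝ) ^ 2) = 324 * (r * K) * (L : ℝ) ^ 2 := by ring
    _ ≤ 324 * (2 * m) * (10 * (√m / √r)) := by gcongr
    _ = 6480 * m * (√m / √r) := by ring

lemma sum_inv_sqrt (m : ℕ) : ∑ r ∈ Finset.Icc 1 m, 1 / √(r : ℝ) ≤ 2 * √m := by
  induction m with
  | zero => simp
  | succ n ih =>
    rw [Finset.sum_Icc_succ_top (by omega)]
    have hp : 0 < √((n + 1 : ℕ) : ℝ) := Real.sqrt_pos.2 (by positivity)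
    have h1 := Real.sq_sqrt (show (0 : ℝ) ≤ ((n + 1 : ℕ) : ℝ) by positivity)
    have h2 := Real.sq_sqrt (show (0 : ℝ) ≤ (n : ℝ) by positivity)
    have : 1 / √((n + 1 : ℕ) : ℝ) ≤ 2 * √((n + 1 : ℕ) : ℝ) - 2 * √(n : ℝ) := by
      rw [div_le_iff₀ hp]
      push_cast at *
      nlinarith [sq_nonneg (√((n : ℝ) + 1) - √(n : ℝ))]
    linarith

/-- Every point of the plane stabs `O(n)` empty triangles of a squared Horton set of
`n = m²` points. -/
theorem squared_horton_stabbed_bound :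
    ∃ C : ℝ, 0 < C ∧ ∀ (m : ℕ) (ε : ℝ) (f : ℝ × ℝ → ℝ × ℝ),
      IsSquaredHorton m ε f → ∀ q : ℝ × ℝ,
        (stabbedCount ↑((grid m).image f) q : ℝ) ≤ C * (m : ℝ) ^ 2 := by
  refine ⟨12960, by norm_num, ?_⟩
  intro m ε f h q
  have h1 : (stabbedCount ↑((grid m).image f) q : ℝ) ≤ ((∑ r ∈ Finset.Icc 1 m,
      12 * r * (27 * (m / r + 1) * (Nat.clog 2 (m / r + 1)) ^ 2) : ℕ) : ℝ) := by
    exact_mod_cast stab_nat h q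
  refine h1.trans ?_
  rw [Nat.cast_sum]
  calc _ ≤ ∑ r ∈ Finset.Icc 1 m, 6480 * (m : ℝ) * (√m / √r) := by
        refine Finset.sum_le_sum fun r hr => ?_
        rw [Finset.mem_Icc] at hr
        exact term_bound hr.1 hr.2
    _ = 6480 * m * √m * ∑ r ∈ Finset.Icc 1 m, 1 / √(r : ℝ) := by
        rw [Finset.mul_sum]
        refine Finset.sum_congr rfl fun r _ => ?_
        ring
    _ ≤ 6480 * m * √m * (2 * √m) := by
        gcongr
        exact sum_inv_sqrt m
    _ = 12960 * (m : ℝ) ^ 2 := by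
        have := Real.mul_self_sqrt (show (0 : ℝ) ≤ m by positivity)
        linear_combination (12960 * (m : ℝ)) * this
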